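/- arXiv:1406.6918 — 2 statements merged into one kernel-verified Lean document; each statement's English description precedes it below -/
import Mathlib

section
/- For every integer m > 0, the triple (FIN_m^[∞], ≤, r) is a topological Ramsey space. -/
open Topology

section Ellentuck

variable {R α : Type*}

/-- The basic set `[a,A] = {B ∈ R : B ≤ A and r_n(B) = a for some n}` of the
Ellentuck topology determined by a quasi-order `le` and approximation
mappings `r`. -/
def EllSet (le : R → R → Prop) (r : ℕ → R → α) (a : α) (A : R) : Set R :=
  {B | le B A ∧ ∃ n, r n B = a}

/-- The Ellentuck topology on `R`, generated by the basic sets `[a,A]`. -/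
def EllTop (le : R → R → Prop) (r : ℕ → R → α) : TopologicalSpace R :=
  TopologicalSpace.generateFrom {s | ∃ a A, s = EllSet le r a A}

/-- A set `S ⊆ R` is Ramsey: for every nonempty `[a,A]` there is `B ∈ [a,A]`
with `[a,B] ⊆ S` or `[a,B] ∩ S = ∅`. -/
def IsRamseySet (le : R → R → Prop) (r : ℕ → R → α) (S : Set R) : Prop :=
  ∀ (a : α) (A : R), (EllSet le r a A).Nonempty →
    ∃ B ∈ EllSet le r a A, EllSet le r a B ⊆ S ∨ EllSet le r a B ∩ S = ∅

/-- A set `S ⊆ R` is Ramsey null: for every nonempty `[a,A]` there is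
`B ∈ [a,A]` with `[a,B] ∩ S = ∅`. -/
def IsRamseyNullSet (le : R → R → Prop) (r : ℕ → R → α) (S : Set R) : Prop :=
  ∀ (a : α) (A : R), (EllSet le r a A).Nonempty →
    ∃ B ∈ EllSet le r a A, EllSet le r a B ∩ S = ∅

/-- A set has the property of Baire with respect to a topology `t`: it is the
symmetric difference of a `t`-open set and a `t`-meager set. -/
def HasPropertyOfBaire (t : TopologicalSpace R) (S : Set R) : Prop :=
  ∃ U M : Set R, IsOpen[t] U ∧ @IsMeagre R t M ∧ S = symmDiff U M

/-- `(R, ≤, r)` is a topological Ramsey space: every subset of `R` with the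
property of Baire in the Ellentuck topology is Ramsey, and every
Ellentuck-meager subset is Ramsey null. -/
def IsTopRamseySpace (le : R → R → Prop) (r : ℕ → R → α) : Prop :=
  (∀ S : Set R, HasPropertyOfBaire (EllTop le r) S → IsRamseySet le r S) ∧
  (∀ S : Set R, @IsMeagre R (EllTop le r) S → IsRamseyNullSet le r S)

end Ellentuck

/-- `FIN_m`: the finitely supported functions `p : ω → {0,…,m}` attaining the
value `m`. -/
def FINm (m : ℕ) : Set (ℕ → ℕ) :=
  {p | (∀ i, p i ≤ m) ∧ {i | p i ≠ 0}.Finite ∧ ∃ i, p i = m}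

/-- A block sequence of elements of `FIN_m`: consecutive supports are
completely separated. -/
def IsBlockSeq (m : ℕ) (P : ℕ → ℕ → ℕ) : Prop :=
  (∀ n, P n ∈ FINm m) ∧ ∀ n i j, P n i ≠ 0 → P (n + 1) j ≠ 0 → i < j

/-- `FIN_m^[∞]`, the space of all block sequences of elements of `FIN_m`. -/
def BlockSeq (m : ℕ) : Type := {P : ℕ → ℕ → ℕ // IsBlockSeq m P}

/-- The combinatorial span `[P]` of a block sequence `P`: all sums
`T^{j_0}(p_{n_0}) + ⋯ + T^{j_q}(p_{n_q})` where `n_0 < ⋯ < n_q`,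
`0 ≤ j_i ≤ m−1` and some `j_i = 0`; here the tetris operation satisfies
`T^j(p)(i) = max (p i − j) 0 = p i - j` (truncated subtraction), and since
the supports of the summands are pairwise disjoint the sum is pointwise. -/
def blockSpan (m : ℕ) (P : ℕ → ℕ → ℕ) : Set (ℕ → ℕ) :=
  {q | ∃ F : Finset ℕ, F.Nonempty ∧ ∃ j : ℕ → ℕ,
        (∀ n ∈ F, j n ≤ m - 1) ∧ (∃ n ∈ F, j n = 0) ∧
        q = fun i => ∑ n ∈ F, (P n i - j n)}

/-- The quasi-order on `FIN_m^[∞]`: `Q ≤ P` iff every term of `Q` lies in the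
combinatorial span `[P]`. -/
def blockLe (m : ℕ) (Q P : BlockSeq m) : Prop :=
  ∀ n, Q.val n ∈ blockSpan m P.val

/-- The approximation map on `FIN_m^[∞]`: `r n P` is the initial segment
`(p_0, …, p_{n−1})` of `P`. -/
def blockR (m : ℕ) (n : ℕ) (P : BlockSeq m) : List (ℕ → ℕ) :=
  List.ofFn fun i : Fin n => P.val i

/-!
By Todorcevic's abstract Ellentuck theorem, it suffices to verify the axioms A.1–A.4. Under these
axioms, fusion turns a property that can be ensured at one finite approximation into one that holds
at all approximations simultaneously. Applied to combinatorial forcing it shows that open sets are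
Ramsey; applied to avoiding ever larger finite unions it shows that a countable union of Ramsey null
sets is Ramsey null, hence that meager sets are.

For `FIN_m`, the substance is the pigeonhole principle A.4, which is Gowers' theorem. An induction
on `k` produces an idempotent ultrafilter `U` on `FIN_k` that absorbs its image under the tetris
operation: from `U`, choose a lift `V` to `FIN_{k+1}` for which `V * U` is idempotent; then
`U * V * U` is the next ultrafilter. A Galvin–Glazer construction extracts from it a block sequence
whose span is homogeneous.

Combinations of a block sequence are encoded by coefficient sequences, which are themselves members
of `FIN_m`. That a span of spans is a span is then the associativity of a matrix product.
-/

section AbstractEllentuck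

variable {R α : Type*} {le : R → R → Prop} {r : ℕ → R → α} {leFin : α → α → Prop}

/-- Todorcevic's `depth_B(a)`: the least `n` such that `a` lies below the `n`-th approximation
of `B`. It is `0` if there is no such `n`. -/
noncomputable def depth (leFin : α → α → Prop) (r : ℕ → R → α) (B : R) (a : α) : ℕ :=
  sInf {n | leFin a (r n B)}

/-- Todorcevic's axioms for `(R, ≤, r)` relative to a relation `leFin` on finite approximations,
as far as the abstract Ellentuck theorem needs them: A.1 (`restrict`), A.2 (`finite_leFin`,
`le_iff`, `initial`), A.3 (`amalgamate`, `amalgamate_le`), A.4 (`pigeonhole`) and the closedness of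
`R` in the space of sequences of approximations (`closed`). The set written
`[depth_B(a), B]` in the literature is `EllSet le r (r (depth leFin r B a) B) B`. -/
structure RamseyAxioms (le : R → R → Prop) (r : ℕ → R → α) (leFin : α → α → Prop) : Prop where
  refl : ∀ A, le A A
  trans : ∀ {A B C}, le A B → le B C → le A C
  restrict : ∀ {k n A B}, r k A = r n B → k = n ∧ ∀ i ≤ k, r i A = r i B
  closed : ∀ A : ℕ → R, (∀ n, r n (A (n + 1)) = r n (A n)) → ∃ B, ∀ n, r n B = r n (A n)
  finite_leFin : ∀ b, {a | (∃ n A, r n A = a) ∧ leFin a b}.Finite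
  le_iff : ∀ {A B}, le A B ↔ ∀ n, ∃ k, leFin (r n A) (r k B)
  initial : ∀ {i n k A B}, leFin (r n A) (r k B) → i ≤ n → ∃ j ≤ k, leFin (r i A) (r j B)
  amalgamate : ∀ {a A B}, (EllSet le r a B).Nonempty →
    A ∈ EllSet le r (r (depth leFin r B a) B) B → (EllSet le r a A).Nonempty
  amalgamate_le : ∀ {a A B}, le A B → (EllSet le r a A).Nonempty →
    ∃ A' ∈ EllSet le r (r (depth leFin r B a) B) B, EllSet le r a A' ⊆ EllSet le r a A
  pigeonhole : ∀ {a B}, (EllSet le r a B).Nonempty → ∀ O : Set α,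
    ∃ A ∈ EllSet le r (r (depth leFin r B a) B) B,
      (∀ C ∈ EllSet le r a A, ∀ n, r n C = a → r (n + 1) C ∈ O) ∨
      (∀ C ∈ EllSet le r a A, ∀ n, r n C = a → r (n + 1) C ∉ O)

/-- A property of pairs `(b, B)` to which fusion applies: it passes from `B` to every `A ≤ B`, and
every nonempty `[b, A]` contains, in `[depth_A(b), A]`, some `B` satisfying it. -/
structure IsDenseHereditary (le : R → R → Prop) (r : ℕ → R → α) (leFin : α → α → Prop)
    (D : α → R → Prop) : Prop where
  hereditary : ∀ {b A B}, le A B → D b B → D b A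
  dense : ∀ {b A}, (EllSet le r b A).Nonempty →
    ∃ B ∈ EllSet le r (r (depth leFin r A b) A) A, D b B

namespace RamseyAxioms

theorem mem_ellSet_r (H : RamseyAxioms le r leFin) {n : ℕ} {A A' B : R} :
    B ∈ EllSet le r (r n A) A' ↔ le B A' ∧ r n B = r n A := by
  refine and_congr_right fun _ => ⟨fun ⟨k, hk⟩ => ?_, fun h => ⟨n, h⟩⟩
  obtain ⟨rfl, -⟩ := H.restrict hk
  exact hk

theorem ellSet_mono (H : RamseyAxioms le r leFin) {a : α} {A B : R} (h : le A B) :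
    EllSet le r a A ⊆ EllSet le r a B := fun _ hC => ⟨H.trans hC.1 h, hC.2⟩

theorem self_mem_ellSet (H : RamseyAxioms le r leFin) (n : ℕ) (A : R) :
    A ∈ EllSet le r (r n A) A := ⟨H.refl A, n, rfl⟩

theorem ellSet_r_anti (H : RamseyAxioms le r leFin) {k n : ℕ} (h : k ≤ n) (A B : R) :
    EllSet le r (r n A) B ⊆ EllSet le r (r k A) B := fun _ hC =>
  have ⟨hle, heq⟩ := H.mem_ellSet_r.1 hC
  ⟨hle, k, (H.restrict heq).2 k h⟩

theorem ellSet_r_trans (H : RamseyAxioms le r leFin) {n : ℕ} {A B C : R}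
    (hB : B ∈ EllSet le r (r n A) A) (hC : C ∈ EllSet le r (r n B) B) :
    C ∈ EllSet le r (r n A) A := by
  rw [H.mem_ellSet_r] at *
  exact ⟨H.trans hC.1 hB.1, hC.2.trans hB.2⟩

theorem leFin_depth (H : RamseyAxioms le r leFin) {a : α} {B : R}
    (h : (EllSet le r a B).Nonempty) : leFin a (r (depth leFin r B a) B) := by
  obtain ⟨C, hC, n, rfl⟩ := h
  exact Nat.sInf_mem (H.le_iff.1 hC n)

theorem depth_congr (H : RamseyAxioms le r leFin) {a : α} {A B : R} {d : ℕ}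
    (h : (EllSet le r a B).Nonempty) (hd : depth leFin r B a ≤ d) (hAB : r d A = r d B) :
    depth leFin r A a = depth leFin r B a := by
  have agree : ∀ i ≤ d, r i A = r i B := (H.restrict hAB).2
  have hA : leFin a (r (depth leFin r B a) A) := agree _ hd ▸ H.leFin_depth h
  have hle : depth leFin r A a ≤ depth leFin r B a := Nat.sInf_le hA
  refine le_antisymm hle (Nat.sInf_le ?_)
  have hmem : depth leFin r A a ∈ {n | leFin a (r n A)} := Nat.sInf_mem ⟨_, hA⟩
  rwa [Set.mem_ofPred_eq, agree _ (hle.trans hd)] at hmem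

theorem depth_le_depth (H : RamseyAxioms le r leFin) {B C : R} {k n : ℕ} (hC : le C B)
    (hkn : k ≤ n) : depth leFin r B (r k C) ≤ depth leFin r B (r n C) := by
  obtain ⟨j, hj, hle⟩ := H.initial (H.leFin_depth ⟨C, hC, n, rfl⟩) hkn
  exact (Nat.sInf_le hle).trans hj

theorem exists_mem_ellSet_le (H : RamseyAxioms le r leFin) {a : α} {A B : R}
    (h : (EllSet le r a A).Nonempty) (hB : B ∈ EllSet le r (r (depth leFin r A a) A) A) :
    ∃ C ∈ EllSet le r a A, le C B := by
  obtain ⟨C, hCB, hC⟩ := H.amalgamate h hB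
  exact ⟨C, ⟨H.trans hCB hB.1, hC⟩, hCB⟩

/-! ### Fusion -/

theorem exists_fusion_limit (H : RamseyAxioms le r leFin) {d : ℕ} {S : ℕ → R}
    (hS : ∀ n, S (n + 1) ∈ EllSet le r (r (d + n) (S n)) (S n)) :
    ∃ B, ∀ n, B ∈ EllSet le r (r (d + n) (S n)) (S n) := by
  simp only [H.mem_ellSet_r] at hS ⊢
  have anti : ∀ {i j}, i ≤ j → le (S j) (S i) := fun {i j} hij => by
    induction hij with
    | refl => exact H.refl _
    | step _ ih => exact H.trans (hS _).1 ih
  obtain ⟨B, hB⟩ := H.closed (fun n => S (n - d)) fun n => by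
    rcases lt_or_ge n d with hn | hn
    · rw [Nat.sub_eq_zero_of_le hn, Nat.sub_eq_zero_of_le hn.le]
    · obtain ⟨j, rfl⟩ := Nat.exists_eq_add_of_le hn
      simpa only [add_assoc, add_tsub_cancel_left] using (hS j).2
  have hBS : ∀ n, r (d + n) B = r (d + n) (S n) := fun n => by
    simpa only [add_tsub_cancel_left] using hB (d + n)
  refine ⟨B, fun n => ⟨H.le_iff.2 fun i => ?_, hBS n⟩⟩
  have hi : r i B = r i (S (n + i)) := (H.restrict (hBS (n + i))).2 i (by lia)
  exact hi ▸ H.le_iff.1 (anti (Nat.le_add_right n i)) i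

variable {D : α → R → Prop}

theorem exists_forall_mem_finite (H : RamseyAxioms le r leFin) (hD : IsDenseHereditary le r leFin D)
    {T : Set α} (hT : T.Finite) (N : ℕ) (A : R) :
    ∃ B ∈ EllSet le r (r N A) A,
      ∀ b ∈ T, (EllSet le r b B).Nonempty → depth leFin r B b = N → D b B := by
  induction T, hT using Set.Finite.induction_on with
  | empty => exact ⟨A, H.self_mem_ellSet N A, by simp⟩
  | @insert b T _ _ ih =>
    obtain ⟨B, hB, hBT⟩ := ih
    by_cases hb : (EllSet le r b B).Nonempty ∧ depth leFin r B b = N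
    · obtain ⟨hne, rfl⟩ := hb
      obtain ⟨C, hC, hDC⟩ := hD.dense hne
      obtain ⟨hCB, hrC⟩ := H.mem_ellSet_r.1 hC
      refine ⟨C, H.ellSet_r_trans hB hC, Set.forall_mem_insert.2 ⟨fun _ _ => hDC, ?_⟩⟩
      intro b' hb' hne' hdepth
      exact hD.hereditary hCB (hBT b' hb' (hne'.mono (H.ellSet_mono hCB))
        ((H.depth_congr hne' hdepth.le hrC.symm).trans hdepth))
    · exact ⟨B, hB, Set.forall_mem_insert.2 ⟨fun hne hd => absurd ⟨hne, hd⟩ hb, hBT⟩⟩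

theorem exists_forall_depth_eq (H : RamseyAxioms le r leFin) (hD : IsDenseHereditary le r leFin D)
    (N : ℕ) (A : R) :
    ∃ B ∈ EllSet le r (r N A) A,
      ∀ b, (EllSet le r b B).Nonempty → depth leFin r B b = N → D b B := by
  obtain ⟨B, hB, hT⟩ := H.exists_forall_mem_finite hD (H.finite_leFin (r N A)) N A
  refine ⟨B, hB, fun b hne hdepth => hT b ⟨?_, ?_⟩ hne hdepth⟩
  · obtain ⟨C, -, n, hn⟩ := hne
    exact ⟨n, C, hn⟩
  · rw [← (H.mem_ellSet_r.1 hB).2, ← hdepth]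
    exact H.leFin_depth hne

theorem fusion (H : RamseyAxioms le r leFin) (hD : IsDenseHereditary le r leFin D)
    {a : α} {A : R} (h : (EllSet le r a A).Nonempty) :
    ∃ B ∈ EllSet le r (r (depth leFin r A a) A) A,
      ∀ C k n, le C B → r k C = a → k ≤ n → D (r n C) B := by
  set d := depth leFin r A a
  choose next hnext hstep using H.exists_forall_depth_eq hD
  let S : ℕ → R := fun n => n.rec A fun n X => next (d + n) X
  obtain ⟨B, hB⟩ := H.exists_fusion_limit (d := d) (S := S) fun n => hnext (d + n) (S n)
  refine ⟨B, hB 0, fun C k n hC hk hkn => ?_⟩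
  have hne : (EllSet le r (r n C) B).Nonempty := ⟨C, hC, n, rfl⟩
  have hda : depth leFin r B (r k C) = d :=
    hk ▸ H.depth_congr h le_rfl (H.mem_ellSet_r.1 (hB 0)).2
  obtain ⟨j, hj⟩ := Nat.exists_eq_add_of_le (hda ▸ H.depth_le_depth hC hkn)
  obtain ⟨hBS, hrS⟩ := H.mem_ellSet_r.1 (hB (j + 1))
  have hdepth : depth leFin r (S (j + 1)) (r n C) = d + j :=
    (H.depth_congr hne (by lia) hrS.symm).trans hj
  exact hD.hereditary hBS (hstep (d + j) (S j) _ (hne.mono (H.ellSet_mono hBS)) hdepth)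

/-! ### Open sets are Ramsey -/

theorem exists_ellSet_subset_of_isOpen (H : RamseyAxioms le r leFin) {U : Set R}
    (hU : IsOpen[EllTop le r] U) {B : R} (hB : B ∈ U) : ∃ n, EllSet le r (r n B) B ⊆ U := by
  induction hU with
  | basic s hs =>
    obtain ⟨a, A, rfl⟩ := hs
    obtain ⟨hBA, n, rfl⟩ := hB
    exact ⟨n, H.ellSet_mono hBA⟩
  | univ => exact ⟨0, Set.subset_univ _⟩
  | inter s t _ _ ihs iht =>
    obtain ⟨k, hk⟩ := ihs hB.1
    obtain ⟨n, hn⟩ := iht hB.2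
    exact ⟨max k n, Set.subset_inter ((H.ellSet_r_anti (le_max_left k n) B B).trans hk)
      ((H.ellSet_r_anti (le_max_right k n) B B).trans hn)⟩
  | sUnion 𝒮 _ ih =>
    obtain ⟨s, hs, hBs⟩ := hB
    obtain ⟨n, hn⟩ := ih s hs hBs
    exact ⟨n, hn.trans (Set.subset_sUnion_of_mem hs)⟩

/-- Combinatorial forcing: `X` *decides* `b` with respect to `U` if either `[b,X] ⊆ U` (`X`
accepts `b`), or no nonempty `[b,C]` with `C ≤ X` is contained in `U` (`X` rejects `b`). -/
def Decides (le : R → R → Prop) (r : ℕ → R → α) (U : Set R) (b : α) (X : R) : Prop :=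
  EllSet le r b X ⊆ U ∨ ∀ C, le C X → (EllSet le r b C).Nonempty → ¬ EllSet le r b C ⊆ U

theorem exists_forall_decides (H : RamseyAxioms le r leFin) (U : Set R) {a : α} {A : R}
    (h : (EllSet le r a A).Nonempty) :
    ∃ X ∈ EllSet le r (r (depth leFin r A a) A) A,
      ∀ C k n, le C X → r k C = a → k ≤ n → Decides le r U (r n C) X := by
  refine H.fusion ⟨fun hAB => ?_, fun {b A} _ => ?_⟩ h
  · exact Or.imp (H.ellSet_mono hAB).trans fun hrej C hC => hrej C (H.trans hC hAB)
  · by_cases hacc : ∃ C, le C A ∧ (EllSet le r b C).Nonempty ∧ EllSet le r b C ⊆ U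
    · obtain ⟨C, hCA, hne, hCU⟩ := hacc
      obtain ⟨B, hB, hBC⟩ := H.amalgamate_le hCA hne
      exact ⟨B, hB, Or.inl (hBC.trans hCU)⟩
    · exact ⟨A, H.self_mem_ellSet _ A, Or.inr fun C hC hne hCU => hacc ⟨C, hC, hne, hCU⟩⟩

theorem exists_forall_reject (H : RamseyAxioms le r leFin) {U : Set R} {a : α} {X : R}
    (h : (EllSet le r a X).Nonempty) (hrej : ¬ EllSet le r a X ⊆ U)
    (hX : ∀ C k n, le C X → r k C = a → k ≤ n → Decides le r U (r n C) X) :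
    ∃ Y ∈ EllSet le r (r (depth leFin r X a) X) X,
      ∀ C k n, le C Y → r k C = a → k ≤ n → ¬ EllSet le r (r n C) X ⊆ U := by
  let O : Set α := {c | EllSet le r c X ⊆ U}
  obtain ⟨Y, hY, hYO⟩ := H.fusion (a := a) (A := X)
    (D := fun b Y => (∀ C ∈ EllSet le r b Y, ∀ n, r n C = b → r (n + 1) C ∈ O) ∨
      (∀ C ∈ EllSet le r b Y, ∀ n, r n C = b → r (n + 1) C ∉ O))
    ⟨fun hAB => Or.imp (fun hO C hC => hO C (H.ellSet_mono hAB hC))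
      fun hO C hC => hO C (H.ellSet_mono hAB hC), fun hne => H.pigeonhole hne O⟩ h
  refine ⟨Y, hY, fun C k n hC hk hkn => ?_⟩
  induction n, hkn using Nat.le_induction with
  | base => exact hk ▸ hrej
  | succ n hkn ih =>
    have hCY : C ∈ EllSet le r (r n C) Y := ⟨hC, n, rfl⟩
    intro hacc
    obtain hO | hO := hYO C k n hC hk hkn
    · have hYU : EllSet le r (r n C) Y ⊆ U := fun E hE =>
        hO E hE n (H.mem_ellSet_r.1 hE).2 ⟨H.trans hE.1 hY.1, n + 1, rfl⟩
      exact (hX C k n (H.trans hC hY.1) hk hkn).elim ih fun hrej => hrej Y hY.1 ⟨C, hCY⟩ hYU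
    · exact hO C hCY n rfl hacc

theorem isRamseySet_of_isOpen (H : RamseyAxioms le r leFin) {U : Set R}
    (hU : IsOpen[EllTop le r] U) : IsRamseySet le r U := by
  intro a A h
  obtain ⟨X, hXA, hX⟩ := H.exists_forall_decides U h
  by_cases hacc : EllSet le r a X ⊆ U
  · obtain ⟨B, hB, hBX⟩ := H.exists_mem_ellSet_le h hXA
    exact ⟨B, hB, Or.inl ((H.ellSet_mono hBX).trans hacc)⟩
  have hne : (EllSet le r a X).Nonempty := H.amalgamate h hXA
  obtain ⟨Y, hYX, hY⟩ := H.exists_forall_reject hne hacc hX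
  obtain ⟨B, hB, hBY⟩ := H.exists_mem_ellSet_le hne hYX
  refine ⟨B, H.ellSet_mono hXA.1 hB, Or.inr (Set.disjoint_iff_inter_eq_empty.1 ?_)⟩
  refine Set.disjoint_left.2 fun C ⟨hCB, k, hk⟩ hCU => ?_
  have hCY : le C Y := H.trans hCB hBY
  obtain ⟨n, hn⟩ := H.exists_ellSet_subset_of_isOpen hU hCU
  have hCU' : EllSet le r (r (max n k) C) C ⊆ U := (H.ellSet_r_anti (le_max_left n k) C C).trans hn
  have hCX : le C X := H.trans hCY hYX.1
  exact (hX C k (max n k) hCX hk (le_max_right n k)).elim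
    (hY C k (max n k) hCY hk (le_max_right n k))
    fun hrej => hrej C hCX ⟨C, H.self_mem_ellSet _ C⟩ hCU'

/-! ### Meager sets are Ramsey null -/

theorem isRamseyNullSet_of_isNowhereDense (H : RamseyAxioms le r leFin) {S : Set R}
    (hS : @IsNowhereDense R (EllTop le r) S) : IsRamseyNullSet le r S := by
  let _ : TopologicalSpace R := EllTop le r
  intro a A h
  obtain ⟨B, hB, hsub | hdisj⟩ := H.isRamseySet_of_isOpen (isClosed_closure (s := S)).isOpen_compl
    a A h
  · refine ⟨B, hB, Set.disjoint_iff_inter_eq_empty.1 ?_⟩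
    exact (Set.disjoint_left.2 hsub).mono_right subset_closure
  · have hopen : IsOpen (EllSet le r a B) := TopologicalSpace.isOpen_generateFrom_of_mem ⟨a, B, rfl⟩
    have hclosure : EllSet le r a B ⊆ closure S := fun C hC =>
      of_not_not fun hCS => Set.disjoint_left.1 (Set.disjoint_iff_inter_eq_empty.2 hdisj) hC hCS
    have hmem : B ∈ interior (closure S) :=
      interior_maximal hclosure hopen ⟨H.refl B, hB.2⟩
    exact absurd hmem (hS.symm ▸ Set.notMem_empty B)

theorem isRamseyNullSet_union (H : RamseyAxioms le r leFin) {S T : Set R}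
    (hS : IsRamseyNullSet le r S) (hT : IsRamseyNullSet le r T) :
    IsRamseyNullSet le r (S ∪ T) := by
  intro a A h
  obtain ⟨B, hB, hBS⟩ := hS a A h
  obtain ⟨C, hC, hCT⟩ := hT a B ⟨B, H.refl B, hB.2⟩
  refine ⟨C, H.ellSet_mono hB.1 hC, ?_⟩
  rw [Set.inter_union_distrib_left, hCT, Set.union_empty]
  exact Set.subset_eq_empty (Set.inter_subset_inter_left S (H.ellSet_mono hC.1)) hBS

theorem isRamseyNullSet_accumulate (H : RamseyAxioms le r leFin) {S : ℕ → Set R}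
    (hS : ∀ n, IsRamseyNullSet le r (S n)) (n : ℕ) :
    IsRamseyNullSet le r (Set.accumulate S n) := by
  induction n with
  | zero => simpa only [Set.accumulate_zero_nat] using hS 0
  | succ n ih => exact Set.accumulate_succ S n ▸ H.isRamseyNullSet_union ih (hS (n + 1))

theorem isRamseyNullSet_iUnion (H : RamseyAxioms le r leFin) {S : ℕ → Set R}
    (hS : ∀ n, IsRamseyNullSet le r (S n)) : IsRamseyNullSet le r (⋃ n, S n) := by
  intro a A h
  have hAvoid : IsDenseHereditary le r leFin fun b Y =>
      ∀ C ∈ EllSet le r b Y, ∀ n, r n C = b → C ∉ Set.accumulate S n := by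
    refine ⟨fun hAB hD C hC => hD C (H.ellSet_mono hAB hC), ?_⟩
    rintro b A ⟨C, hC, n, rfl⟩
    obtain ⟨E, hE, hES⟩ := H.isRamseyNullSet_accumulate hS n (r n C) A ⟨C, hC, n, rfl⟩
    obtain ⟨B, hB, hBE⟩ := H.amalgamate_le hE.1 ⟨E, H.refl E, hE.2⟩
    refine ⟨B, hB, fun X hX k hk hXS => ?_⟩
    obtain ⟨rfl, -⟩ := H.restrict hk
    exact Set.notMem_empty X (hES ▸ ⟨hBE hX, hXS⟩)
  obtain ⟨B, hB, hBS⟩ := H.fusion hAvoid h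
  obtain ⟨C, hC, hCB⟩ := H.exists_mem_ellSet_le h hB
  refine ⟨C, hC, Set.disjoint_iff_inter_eq_empty.1 (Set.disjoint_iUnion_right.2 fun i => ?_)⟩
  refine Set.disjoint_left.2 fun X ⟨hXC, k, hk⟩ hXS => ?_
  have hXB : le X B := H.trans hXC hCB
  exact hBS X k (max i k) hXB hk (le_max_right i k) X ⟨hXB, _, rfl⟩ _ rfl
    (Set.mem_accumulate.2 ⟨i, le_max_left i k, hXS⟩)

theorem isRamseyNullSet_of_isMeagre (H : RamseyAxioms le r leFin) {M : Set R}
    (hM : @IsMeagre R (EllTop le r) M) : IsRamseyNullSet le r M := by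
  let _ : TopologicalSpace R := EllTop le r
  obtain ⟨𝒮, hnd, hcount, hsub⟩ := isMeagre_iff_countable_union_isNowhereDense.1 hM
  obtain ⟨S, hS⟩ := (hcount.insert ∅).exists_eq_range (Set.insert_nonempty _ _)
  have hSnd : ∀ n, IsNowhereDense (S n) := fun n => by
    obtain hn | hn : S n ∈ insert ∅ 𝒮 := hS ▸ Set.mem_range_self n
    · exact hn ▸ isNowhereDense_empty
    · exact hnd _ hn
  have hMS : M ⊆ ⋃ n, S n := by
    rw [← Set.sUnion_range, ← hS]
    exact hsub.trans (Set.sUnion_mono (Set.subset_insert _ _))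
  intro a A h
  obtain ⟨B, hB, hdisj⟩ :=
    H.isRamseyNullSet_iUnion (fun n => H.isRamseyNullSet_of_isNowhereDense (hSnd n)) a A h
  exact ⟨B, hB, Set.subset_eq_empty (Set.inter_subset_inter_right _ hMS) hdisj⟩

theorem isRamseySet_of_hasPropertyOfBaire (H : RamseyAxioms le r leFin) {S : Set R}
    (hS : HasPropertyOfBaire (EllTop le r) S) : IsRamseySet le r S := by
  obtain ⟨U, M, hU, hM, rfl⟩ := hS
  intro a A h
  obtain ⟨B, hB, hBM⟩ := H.isRamseyNullSet_of_isMeagre hM a A h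
  obtain ⟨C, hC, hCU⟩ := H.isRamseySet_of_isOpen hU a B ⟨B, H.refl B, hB.2⟩
  have hCM : ∀ X ∈ EllSet le r a C, X ∉ M := fun X hX hXM =>
    Set.notMem_empty X (hBM ▸ ⟨H.ellSet_mono hC.1 hX, hXM⟩)
  have hiff : ∀ X ∈ EllSet le r a C, X ∈ symmDiff U M ↔ X ∈ U := fun X hX => by
    simp [Set.mem_symmDiff, hCM X hX]
  refine ⟨C, H.ellSet_mono hB.1 hC, hCU.imp (fun hsub X hX => (hiff X hX).2 (hsub hX)) ?_⟩
  simp only [← Set.disjoint_iff_inter_eq_empty, Set.disjoint_left]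
  exact fun hdisj X hX hXS => hdisj hX ((hiff X hX).1 hXS)

/-- Todorcevic's abstract Ellentuck theorem. -/
theorem isTopRamseySpace (H : RamseyAxioms le r leFin) : IsTopRamseySpace le r :=
  ⟨fun _ => H.isRamseySet_of_hasPropertyOfBaire, fun _ => H.isRamseyNullSet_of_isMeagre⟩

end RamseyAxioms

end AbstractEllentuck

section Span

variable {m : ℕ}

/-- The combination `∑ T^{m - p n}(X n)` with coefficient sequence `p`: a matrix product over the
semiring `{0, …, m}` with addition `max` and multiplication `x + y - m`, so that the coefficient
`m` leaves a term unchanged and the coefficient `0` omits it. -/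
noncomputable def blockComb (m : ℕ) (X : ℕ → ℕ → ℕ) (p : ℕ → ℕ) : ℕ → ℕ :=
  fun i => ⨆ n, (X n i + p n - m)

/-- The combinations of the terms of `X` with indices in `s`, the finite partial spans being the
case `s = {0, …, n - 1}`. -/
def spanOn (m : ℕ) (X : ℕ → ℕ → ℕ) (s : Set ℕ) : Set (ℕ → ℕ) :=
  {q | ∃ p ∈ FINm m, (∀ n, p n ≠ 0 → n ∈ s) ∧ blockComb m X p = q}

theorem lt_blockComb_iff {X : ℕ → ℕ → ℕ} {p : ℕ → ℕ} (hX : ∀ n i, X n i ≤ m)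
    (hp : ∀ n, p n ≤ m) {i c : ℕ} : c < blockComb m X p i ↔ ∃ n, m + c < X n i + p n := by
  have hbdd : BddAbove (Set.range fun n => X n i + p n - m) :=
    ⟨m, Set.forall_mem_range.2 fun n => by have := hX n i; have := hp n; lia⟩
  simp only [blockComb, lt_ciSup_iff hbdd, lt_tsub_iff_left]

theorem blockComb_le {X : ℕ → ℕ → ℕ} {p : ℕ → ℕ} (hX : ∀ n i, X n i ≤ m) (hp : ∀ n, p n ≤ m)
    (i : ℕ) : blockComb m X p i ≤ m :=
  ciSup_le fun n => by have := hX n i; have := hp n; lia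

theorem blockComb_congr {X Y : ℕ → ℕ → ℕ} {p : ℕ → ℕ} (hX : ∀ n i, X n i ≤ m)
    (hY : ∀ n i, Y n i ≤ m) (h : ∀ n, p n ≠ 0 → X n = Y n) : blockComb m X p = blockComb m Y p := by
  refine funext fun i => iSup_congr fun n => ?_
  by_cases hn : p n = 0
  · have := hX n i; have := hY n i; lia
  · rw [h n hn]

theorem blockComb_eq_of_forall_ne {X : ℕ → ℕ → ℕ} {p : ℕ → ℕ} {n i : ℕ} (hp : ∀ n, p n ≤ m)
    (h : ∀ k ≠ n, X k i + p k ≤ m) (hX : X n i ≤ m) : blockComb m X p i = X n i + p n - m := by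
  refine le_antisymm (ciSup_le fun k => ?_) (le_ciSup (f := fun n => X n i + p n - m)
    ⟨m, Set.forall_mem_range.2 fun k => ?_⟩ n)
  all_goals
    obtain rfl | hk := eq_or_ne k n
    · have := hp k; lia
    · have := h k hk; lia

theorem blockComb_single {X : ℕ → ℕ → ℕ} (hX : ∀ n i, X n i ≤ m) (n : ℕ) :
    blockComb m X (Pi.single n m) = X n := by
  funext i
  rw [blockComb_eq_of_forall_ne (n := n) _ (fun k hk => by simpa [hk] using hX k i) (hX n i)]
  · simp
  · exact fun k => (Pi.single_apply n m k).trans_le (by split_ifs <;> lia)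

theorem blockComb_blockComb {X y : ℕ → ℕ → ℕ} {p : ℕ → ℕ} (hX : ∀ n i, X n i ≤ m)
    (hy : ∀ n i, y n i ≤ m) (hp : ∀ n, p n ≤ m) :
    blockComb m (fun n => blockComb m X (y n)) p = blockComb m X (blockComb m y p) := by
  refine funext fun i => eq_of_forall_lt_iff fun c => ?_
  have hleft : ∀ n, m + c < blockComb m X (y n) i + p n ↔
      ∃ k, m + (m + c - p n) < X k i + y n k := fun n => by
    rw [← lt_blockComb_iff hX (hy n)]
    have := hp n; lia
  have hright : ∀ k, m + c < X k i + blockComb m y p k ↔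
      ∃ n, m + (m + c - X k i) < y n k + p n := fun k => by
    rw [← lt_blockComb_iff hy hp]
    have := hX k i; lia
  rw [lt_blockComb_iff (fun n => blockComb_le hX (hy n)) hp,
    lt_blockComb_iff hX (blockComb_le hy hp)]
  simp only [hleft, hright]
  rw [exists_comm]
  refine exists_congr fun k => exists_congr fun n => ?_
  have := hX k i; have := hp n; lia

theorem exists_ne_zero_of_blockComb_ne_zero {X : ℕ → ℕ → ℕ} {p : ℕ → ℕ} (hX : ∀ n i, X n i ≤ m)
    (hp : ∀ n, p n ≤ m) {i : ℕ} (h : blockComb m X p i ≠ 0) : ∃ n, p n ≠ 0 ∧ X n i ≠ 0 := by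
  obtain ⟨n, hn⟩ := (lt_blockComb_iff hX hp).1 (Nat.pos_of_ne_zero h)
  refine ⟨n, ?_⟩
  have := hX n i; have := hp n; lia

theorem blockComb_mem_FINm {X : ℕ → ℕ → ℕ} {p : ℕ → ℕ} (hX : ∀ n, X n ∈ FINm m)
    (hp : p ∈ FINm m) : blockComb m X p ∈ FINm m := by
  have hXle : ∀ n i, X n i ≤ m := fun n => (hX n).1
  obtain ⟨hple, hpfin, n, hn⟩ := hp
  obtain ⟨i, hi⟩ := (hX n).2.2
  refine ⟨blockComb_le hXle hple, ?_, i, le_antisymm (blockComb_le hXle hple i) ?_⟩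
  · refine (hpfin.biUnion fun n _ => (hX n).2.1).subset fun i hi => ?_
    obtain ⟨n, hpn, hXn⟩ := exists_ne_zero_of_blockComb_ne_zero hXle hple hi
    exact Set.mem_biUnion hpn hXn
  · refine le_of_forall_lt fun c hc => (lt_blockComb_iff hXle hple).2 ⟨n, ?_⟩
    lia

theorem single_mem_FINm (m n : ℕ) : (Pi.single n m : ℕ → ℕ) ∈ FINm m := by
  refine ⟨fun k => ?_, (Set.finite_singleton n).subset fun k hk => ?_, n,
    Pi.single_eq_same (M := fun _ => ℕ) n m⟩
  · rw [Pi.single_apply]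
    split_ifs <;> lia
  · by_contra hkn
    exact hk (Pi.single_eq_of_ne (M := fun _ => ℕ) hkn m)

theorem spanOn_mono {X : ℕ → ℕ → ℕ} {s t : Set ℕ} (h : s ⊆ t) : spanOn m X s ⊆ spanOn m X t :=
  fun _ ⟨p, hp, hs, hq⟩ => ⟨p, hp, fun n hn => h (hs n hn), hq⟩

theorem spanOn_congr {X Y : ℕ → ℕ → ℕ} {s : Set ℕ} (hX : ∀ n i, X n i ≤ m) (hY : ∀ n i, Y n i ≤ m)
    (h : ∀ n ∈ s, X n = Y n) : spanOn m X s = spanOn m Y s :=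
  Set.ext fun _ => exists_congr fun _ => and_congr_right fun _ => and_congr_right fun hs => by
    rw [blockComb_congr hX hY fun n hn => h n (hs n hn)]

theorem mem_spanOn_self {X : ℕ → ℕ → ℕ} {s : Set ℕ} (hX : ∀ n i, X n i ≤ m) {n : ℕ} (hn : n ∈ s) :
    X n ∈ spanOn m X s :=
  ⟨Pi.single n m, single_mem_FINm m n,
    fun k hk => of_not_not fun hks => hk <|
      Pi.single_eq_of_ne (M := fun _ => ℕ) (fun hkn : k = n => hks (hkn ▸ hn)) m,
    blockComb_single hX n⟩

theorem spanOn_subset_spanOn {X Y : ℕ → ℕ → ℕ} {s t : Set ℕ} (hX : ∀ n i, X n i ≤ m)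
    (hY : ∀ n i, Y n i ≤ m) (h : ∀ n ∈ s, X n ∈ spanOn m Y t) : spanOn m X s ⊆ spanOn m Y t := by
  classical
  rintro _ ⟨p, hp, hps, rfl⟩
  choose! y hyFIN hyt hyX using h
  let z : ℕ → ℕ → ℕ := fun n => if n ∈ s then y n else p
  have hz : ∀ n, z n ∈ FINm m := fun n => by
    by_cases hn : n ∈ s
    · simpa only [z, if_pos hn] using hyFIN n hn
    · simpa only [z, if_neg hn] using hp
  have hzle : ∀ n i, z n i ≤ m := fun n => (hz n).1
  have hzs : ∀ n, p n ≠ 0 → z n = y n := fun n hn => if_pos (hps n hn)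
  refine ⟨blockComb m z p, blockComb_mem_FINm hz hp, fun k hk => ?_, ?_⟩
  · obtain ⟨n, hpn, hzn⟩ := exists_ne_zero_of_blockComb_ne_zero hzle hp.1 hk
    exact hyt n (hps n hpn) k (hzs n hpn ▸ hzn)
  · rw [← blockComb_blockComb hY hzle hp.1]
    refine blockComb_congr (fun n => blockComb_le hY (hzle n)) hX fun n hn => ?_
    rw [hzs n hn, hyX n (hps n hn)]

theorem finite_FINm_support_subset_Iio (m N : ℕ) :
    {p ∈ FINm m | ∀ n, p n ≠ 0 → n ∈ Set.Iio N}.Finite := by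
  refine Set.Finite.of_finite_image (f := fun p (i : Fin N) => p i)
    ((Set.Finite.pi' fun _ => Set.finite_Iic m).subset ?_) fun p hp q hq hpq => funext fun i => ?_
  · rintro _ ⟨p, hp, rfl⟩ i
    exact hp.1.1 i
  · by_cases hi : i < N
    · exact congrFun hpq ⟨i, hi⟩
    · rw [of_not_not (mt (hp.2 i) hi), of_not_not (mt (hq.2 i) hi)]

theorem finite_spanOn_Iio (X : ℕ → ℕ → ℕ) (N : ℕ) : (spanOn m X (Set.Iio N)).Finite :=
  ((finite_FINm_support_subset_Iio m N).image (blockComb m X)).subset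
    fun _ ⟨p, hp, hs, hq⟩ => ⟨p, ⟨hp, hs⟩, hq⟩

theorem exists_mem_spanOn_Iio {X : ℕ → ℕ → ℕ} {q : ℕ → ℕ} (h : q ∈ spanOn m X Set.univ) :
    ∃ N, q ∈ spanOn m X (Set.Iio N) := by
  obtain ⟨p, hp, -, hq⟩ := h
  obtain ⟨N, hN⟩ := hp.2.1.bddAbove
  exact ⟨N + 1, p, hp, fun n hn => Nat.lt_succ_of_le (hN hn), hq⟩

theorem exists_ne_zero_of_mem_spanOn {X : ℕ → ℕ → ℕ} {s : Set ℕ} {q : ℕ → ℕ}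
    (hX : ∀ n i, X n i ≤ m) (h : q ∈ spanOn m X s) {i : ℕ} (hi : q i ≠ 0) :
    ∃ n ∈ s, X n i ≠ 0 := by
  obtain ⟨p, hp, hs, rfl⟩ := h
  obtain ⟨n, hpn, hXn⟩ := exists_ne_zero_of_blockComb_ne_zero hX hp.1 hi
  exact ⟨n, hs n hpn, hXn⟩

end Span

/-! ### Block sequences -/

section BlockSequences

variable {m : ℕ}

namespace IsBlockSeq

variable {X : ℕ → ℕ → ℕ}

theorem le (hX : IsBlockSeq m X) (n i : ℕ) : X n i ≤ m := (hX.1 n).1 i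

theorem exists_peak (hm : 0 < m) (hX : IsBlockSeq m X) :
    ∃ peak : ℕ → ℕ, StrictMono peak ∧ ∀ n, X n (peak n) = m := by
  choose peak hpeak using fun n => (hX.1 n).2.2
  have hne : ∀ n, X n (peak n) ≠ 0 := fun n => hpeak n ▸ hm.ne'
  exact ⟨peak, strictMono_nat_of_lt_succ fun n => hX.2 n _ _ (hne n) (hne (n + 1)), hpeak⟩

theorem supp_lt (hm : 0 < m) (hX : IsBlockSeq m X) {k n i j : ℕ} (hkn : k < n) (hi : X k i ≠ 0)
    (hj : X n j ≠ 0) : i < j := by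
  induction n, hkn using Nat.le_induction generalizing j with
  | base => exact hX.2 k i j hi hj
  | succ n _ ih =>
    obtain ⟨t, ht⟩ := (hX.1 n).2.2
    have htn : X n t ≠ 0 := ht ▸ hm.ne'
    exact (ih htn).trans (hX.2 n t j htn hj)

theorem index_le (hm : 0 < m) (hX : IsBlockSeq m X) {n i : ℕ} (hi : X n i ≠ 0) : n ≤ i := by
  obtain ⟨peak, hmono, hpeak⟩ := hX.exists_peak hm
  cases n with
  | zero => exact Nat.zero_le i
  | succ n => exact (hmono.le_apply (x := n)).trans_lt (hX.2 n _ i (hpeak n ▸ hm.ne') hi)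

theorem eq_zero_of_ne (hm : 0 < m) (hX : IsBlockSeq m X) {k n i : ℕ} (hn : X n i ≠ 0)
    (hkn : k ≠ n) : X k i = 0 := by
  by_contra hk
  rcases hkn.lt_or_gt with h | h
  · exact lt_irrefl i (hX.supp_lt hm h hk hn)
  · exact lt_irrefl i (hX.supp_lt hm h hn hk)

theorem injective (hm : 0 < m) (hX : IsBlockSeq m X) : Function.Injective X := by
  intro k n hkn
  obtain ⟨i, hi⟩ := (hX.1 n).2.2
  have hn : X n i ≠ 0 := hi ▸ hm.ne'
  by_contra hne
  exact hn (hkn ▸ hX.eq_zero_of_ne hm hn hne)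

theorem tail (hX : IsBlockSeq m X) (d : ℕ) : IsBlockSeq m fun n => X (d + n) :=
  ⟨fun n => hX.1 (d + n), fun n => hX.2 (d + n)⟩

theorem sum_eq_blockComb (hm : 0 < m) (hX : IsBlockSeq m X) {p : ℕ → ℕ} (hp : ∀ n, p n ≤ m)
    {F : Finset ℕ} (hF : ∀ n, p n ≠ 0 → n ∈ F) (i : ℕ) :
    ∑ n ∈ F, (X n i - (m - p n)) = blockComb m X p i := by
  have hterm : ∀ n, X n i - (m - p n) = X n i + p n - m := fun n => by have := hp n; lia
  obtain ⟨n, hn⟩ : ∃ n, ∀ k ≠ n, X k i = 0 := by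
    by_cases h : ∃ n, X n i ≠ 0
    · obtain ⟨n, hn⟩ := h
      exact ⟨n, fun k => hX.eq_zero_of_ne hm hn⟩
    · exact ⟨0, fun k _ => of_not_not fun hk => h ⟨k, hk⟩⟩
  rw [blockComb_eq_of_forall_ne hp (fun k hk => by simpa [hn k hk] using hp k) (hX.le n i),
    Finset.sum_eq_single n (fun k _ hk => by rw [hn k hk, zero_tsub]), hterm]
  intro hnF
  have := hX.le n i
  have := of_not_not (mt (hF n) hnF)
  lia

theorem mem_blockSpan_iff (hm : 0 < m) (hX : IsBlockSeq m X) {q : ℕ → ℕ} :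
    q ∈ blockSpan m X ↔ q ∈ spanOn m X Set.univ := by
  classical
  constructor
  · rintro ⟨F, -, j, hj, ⟨n, hn, hjn⟩, rfl⟩
    let p : ℕ → ℕ := fun n => if n ∈ F then m - j n else 0
    have hpF : ∀ n, p n ≠ 0 → n ∈ F := fun n hn => of_not_not fun hnF => hn (if_neg hnF)
    have hple : ∀ n, p n ≤ m := fun n => by simp only [p]; split_ifs <;> lia
    refine ⟨p, ⟨hple, F.finite_toSet.subset hpF, n, ?_⟩, fun _ _ => Set.mem_univ _, ?_⟩
    · simp [p, hn, hjn]
    · funext i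
      rw [← hX.sum_eq_blockComb hm hple hpF]
      refine Finset.sum_congr rfl fun n hn => ?_
      have := hj n hn
      simp only [p, if_pos hn]
      congr 1
      lia
  · rintro ⟨p, ⟨hple, hpfin, n, hn⟩, -, rfl⟩
    have hF : ∀ n, n ∈ hpfin.toFinset ↔ p n ≠ 0 := fun n => hpfin.mem_toFinset
    have hnF : n ∈ hpfin.toFinset := (hF n).2 (hn ▸ hm.ne')
    refine ⟨hpfin.toFinset, ⟨n, hnF⟩, fun n => m - p n, fun n hn => ?_, ⟨n, hnF, by lia⟩,
      funext fun i => (hX.sum_eq_blockComb hm hple (fun n => (hF n).2) i).symm⟩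
    have := (hF n).1 hn
    lia

end IsBlockSeq

theorem blockLe_iff (hm : 0 < m) {A B : BlockSeq m} :
    blockLe m A B ↔ ∀ n, A.val n ∈ spanOn m B.val Set.univ :=
  forall_congr' fun _ => B.2.mem_blockSpan_iff hm

theorem exists_splice (B Z : BlockSeq m) (d N : ℕ)
    (sep : ∀ k < d, ∀ i j, B.val k i ≠ 0 → Z.val N j ≠ 0 → i < j) :
    ∃ W : BlockSeq m, (∀ n < d, W.val n = B.val n) ∧ ∀ n, W.val (d + n) = Z.val (N + n) := by
  let W : ℕ → ℕ → ℕ := fun n => if n < d then B.val n else Z.val (N + (n - d))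
  have hlow : ∀ n < d, W n = B.val n := fun n hn => if_pos hn
  have hhigh : ∀ n, W (d + n) = Z.val (N + n) := fun n => by
    simp only [W, if_neg (Nat.not_lt.2 (Nat.le_add_right d n)), add_tsub_cancel_left]
  refine ⟨⟨W, fun n => ?_, fun n i j hi hj => ?_⟩, hlow, hhigh⟩
  · rcases lt_or_ge n d with hn | hn
    · exact hlow n hn ▸ B.2.1 n
    · obtain ⟨k, rfl⟩ := Nat.exists_eq_add_of_le hn
      exact hhigh k ▸ Z.2.1 (N + k)
  · rcases lt_trichotomy (n + 1) d with hn | rfl | hn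
    · rw [hlow n (by lia)] at hi
      rw [hlow _ hn] at hj
      exact B.2.2 n i j hi hj
    · rw [hlow n (by lia)] at hi
      exact sep n (by lia) i j hi (hhigh 0 ▸ hj)
    · obtain ⟨k, rfl⟩ := Nat.exists_eq_add_of_le (Nat.lt_succ_iff.1 hn)
      rw [hhigh k] at hi
      rw [add_assoc, hhigh (k + 1)] at hj
      exact Z.2.2 (N + k) i j hi hj

end BlockSequences

/-! ### Gowers' theorem -/

section Semigroup

variable {S : Type*} [Semigroup S]

theorem iterate_mul_iterate_eq (T : S →ₙ* S) {u : S} (huu : u * u = u) (hTu : T u * u = u)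
    (huT : u * T u = u) (i j : ℕ) : T^[i] u * T^[j] u = T^[min i j] u := by
  have left : ∀ i, T^[i] u * u = u := fun i => by
    induction i with
    | zero => exact huu
    | succ i ih =>
      calc T^[i + 1] u * u = T^[i] (T u) * (T^[i] u * u) := by rw [ih, Function.iterate_succ_apply]
        _ = T^[i] (T u * u) * u := by rw [iterate_map_mul, mul_assoc]
        _ = u := by rw [hTu, ih]
  have right : ∀ i, u * T^[i] u = u := fun i => by
    induction i with
    | zero => exact huu
    | succ i ih =>
      calc u * T^[i + 1] u = u * T^[i] u * T^[i] (T u) := by rw [ih, Function.iterate_succ_apply]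
        _ = u * T^[i] (u * T u) := by rw [iterate_map_mul, mul_assoc]
        _ = u := by rw [huT, ih]
  rcases le_total i j with h | h
  · obtain ⟨d, rfl⟩ := Nat.exists_eq_add_of_le h
    rw [min_eq_left h, Function.iterate_add_apply, ← iterate_map_mul, right]
  · obtain ⟨d, rfl⟩ := Nat.exists_eq_add_of_le h
    rw [min_eq_right h, Function.iterate_add_apply, ← iterate_map_mul, left]

theorem exists_idempotent_absorbing [TopologicalSpace S] [CompactSpace S] [T2Space S]
    (hcont : ∀ s : S, Continuous (· * s)) {T : S →ₙ* S} (hT : Continuous T) {F : ℕ → Set S}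
    (hclosed : ∀ k, IsClosed (F k))
    (hmul : ∀ {k l u v}, u ∈ F k → v ∈ F l → u * v ∈ F (max k l))
    (hlift : ∀ {k u}, u ∈ F k → ∃ v ∈ F (k + 1), T v = u)
    (hbase : ∃ e ∈ F 0, e * e = e ∧ T e = e) (k : ℕ) :
    ∃ u ∈ F k, u * u = u ∧ T u * u = u ∧ u * T u = u := by
  induction k with
  | zero =>
    obtain ⟨e, he, hee, hTe⟩ := hbase
    exact ⟨e, he, hee, by rw [hTe, hee], by rw [hTe, hee]⟩
  | succ k ih =>
    obtain ⟨u, hu, huu, hTu, huT⟩ := ih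
    let L : Set S := F (k + 1) ∩ T ⁻¹' {u}
    have mul_mem : ∀ {v w}, v ∈ L → w ∈ L → v * w ∈ L := fun ⟨hv, hTv⟩ ⟨hw, hTw⟩ =>
      ⟨max_self (k + 1) ▸ hmul hv hw, by rw [Set.mem_preimage, map_mul, hTv, hTw, huu]; rfl⟩
    have mul_u_mem : ∀ {v}, v ∈ L → v * u ∈ L := fun ⟨hv, hTv⟩ =>
      ⟨max_eq_left (Nat.le_add_right k 1) ▸ hmul hv hu,
        by rw [Set.mem_preimage, map_mul, hTv, huT]; rfl⟩
    have hL : IsCompact L := ((hclosed (k + 1)).inter (isClosed_singleton.preimage hT)).isCompact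
    obtain ⟨v₀, hv₀⟩ := hlift hu
    obtain ⟨_, ⟨v, hv, rfl⟩, hidem⟩ := exists_idempotent_in_compact_subsemigroup hcont
      ((· * u) '' L) ⟨_, v₀, hv₀, rfl⟩ (hL.image (hcont u)) (by
        rintro _ ⟨v, hv, rfl⟩ _ ⟨w, hw, rfl⟩
        exact ⟨v * u * w, mul_mem (mul_u_mem hv) hw, mul_assoc _ _ _⟩)
    have hT' : T (u * (v * u)) = u := by rw [map_mul, (mul_u_mem hv).2, hTu]
    refine ⟨u * (v * u), max_eq_right (Nat.le_add_right k 1) ▸ hmul hu (mul_u_mem hv).1, ?_, ?_, ?_⟩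
    · calc u * (v * u) * (u * (v * u)) = u * (v * (u * u) * (v * u)) := by simp only [mul_assoc]
        _ = u * (v * u) := by rw [huu]; exact congrArg (u * ·) hidem
    · rw [hT', ← mul_assoc, huu]
    · rw [hT', mul_assoc, mul_assoc, huu]

end Semigroup

section Ultrafilters

open Filter

attribute [local instance] Ultrafilter.mul Ultrafilter.semigroup

theorem exists_ultrafilter_map_eq {α β : Type*} {f : α → β} {l : Filter α} {U : Ultrafilter β}
    (h : ↑U ≤ map f l) : ∃ V : Ultrafilter α, ↑V ≤ l ∧ V.map f = U := by
  have hpush : map f (l ⊓ comap f U) = U := by rw [Filter.push_pull, inf_eq_right.2 h]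
  have : NeBot (l ⊓ comap f U) := by rw [← map_neBot_iff f, hpush]; exact U.neBot
  have hle : ↑(Ultrafilter.of (l ⊓ comap f U)) ≤ l ⊓ comap f U := Ultrafilter.of_le _
  refine ⟨Ultrafilter.of (l ⊓ comap f U), hle.trans inf_le_left, Ultrafilter.coe_le_coe.1 ?_⟩
  exact (map_mono hle).trans hpush.le

theorem isClosed_ultrafilter_le {α : Type*} (l : Filter α) :
    IsClosed {U : Ultrafilter α | ↑U ≤ l} := by
  have : {U : Ultrafilter α | ↑U ≤ l} = ⋂ s ∈ l, {U | s ∈ U} := by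
    ext U
    simp only [Set.mem_iInter]
    rfl
  rw [this]
  exact isClosed_biInter fun s _ => ultrafilter_isClosed_basic s

theorem continuous_ultrafilter_map {α β : Type*} (f : α → β) :
    Continuous (Ultrafilter.map f) := by
  refine ultrafilterBasis_is_basis.continuous_iff.2 ?_
  rintro _ ⟨s, rfl⟩
  exact ultrafilter_isOpen_basic (f ⁻¹' s)

/-- The extension of a semigroup homomorphism to the semigroups of ultrafilters. -/
def ultrafilterMapHom {M N : Type*} [Mul M] [Mul N] (f : M →ₙ* N) :
    Ultrafilter M →ₙ* Ultrafilter N where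
  toFun := Ultrafilter.map f
  map_mul' U V := by
    refine Ultrafilter.coe_inj.1 (Filter.ext' fun p => ?_)
    simp only [Ultrafilter.eventually_mul, Ultrafilter.coe_map, eventually_map, map_mul]

theorem iterate_ultrafilter_map {α : Type*} (f : α → α) (U : Ultrafilter α) (n : ℕ) :
    (Ultrafilter.map f)^[n] U = U.map f^[n] := by
  induction n with
  | zero => exact U.map_id.symm
  | succ n ih => rw [Function.iterate_succ_apply', ih, Ultrafilter.map_map, Function.iterate_succ']

section GalvinGlazer

variable {S : Type*} [Monoid S] {T : S → S} {m : ℕ} {U : Ultrafilter S}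

/-- The partial product `c`, in which `l` is the least number of applications of `T` to a factor,
lies in `O l` and can be prolonged by `U`-almost every factor, after at most `m` applications of
`T`, without leaving the family `O`. -/
def Extendable (T : S → S) (m : ℕ) (U : Ultrafilter S) (O : ℕ → Set S) (c : S) (l : ℕ) : Prop :=
  c ∈ O l ∧ ∀ j ≤ m, ∀ᶠ x in U, c * T^[j] x ∈ O (min l j)

theorem Extendable.eventually {O : ℕ → Set S} {c : S} {l j : ℕ}
    (hU : ∀ i j, U.map T^[i] * U.map T^[j] = U.map T^[min i j])
    (h : Extendable T m U O c l) (hj : j ≤ m) :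
    ∀ᶠ x in U, Extendable T m U O (c * T^[j] x) (min l j) := by
  refine (h.2 j hj).and ((eventually_all_finite (Set.finite_Iic m)).2 fun i _ => ?_)
  have hmin : ∀ᶠ w in (U.map T^[min j i] : Filter S), c * w ∈ O (min l (min j i)) :=
    h.2 _ ((min_le_left j i).trans hj)
  rw [← hU, Ultrafilter.eventually_mul] at hmin
  simpa only [Ultrafilter.coe_map, eventually_map, mul_assoc, min_assoc] using hmin

theorem exists_forall_extendable {O : ℕ → Set S} {A : S → Set S}
    (hU : ∀ i j, U.map T^[i] * U.map T^[j] = U.map T^[min i j]) (hA : ∀ y, A y ∈ U)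
    {C : Set (S × ℕ)} (hC : C.Finite) (hext : ∀ c ∈ C, Extendable T m U O c.1 c.2) (y : S) :
    ∃ x ∈ A y, ∀ c ∈ C, ∀ j ≤ m, Extendable T m U O (c.1 * T^[j] x) (min c.2 j) :=
  (Filter.Eventually.and (hA y) <| (eventually_all_finite hC).2 fun c hc =>
    (eventually_all_finite (Set.finite_Iic m)).2 fun _ => (hext c hc).eventually hU).exists

theorem exists_seq_extendable {O : ℕ → Set S} {A : S → Set S} {l : ℕ}
    (hU : ∀ i j, U.map T^[i] * U.map T^[j] = U.map T^[min i j]) (hA : ∀ y, A y ∈ U)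
    (hone : Extendable T m U O 1 l) :
    ∃ (x : ℕ → S) (C : ℕ → Set (S × ℕ)), x 0 ∈ A 1 ∧ (∀ n, x (n + 1) ∈ A (x n)) ∧
      (1, l) ∈ C 0 ∧ (∀ n, ∀ c ∈ C n, ∀ j ≤ m, (c.1 * T^[j] (x n), min c.2 j) ∈ C (n + 1)) ∧
      ∀ n, ∀ c ∈ C n, c.1 ∈ O c.2 := by
  choose! next hnext hstep using fun C y hC hext =>
    exists_forall_extendable (O := O) (m := m) hU hA (C := C) hC hext y
  let s : ℕ → Set (S × ℕ) × S := fun n => n.rec ({(1, l)}, 1) fun _ s =>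
    (Set.image2 (fun c j => (c.1 * T^[j] (next s.1 s.2), min c.2 j)) s.1 (Set.Iic m),
      next s.1 s.2)
  have invariant : ∀ n, (s n).1.Finite ∧ ∀ c ∈ (s n).1, Extendable T m U O c.1 c.2 := fun n => by
    induction n with
    | zero => exact ⟨Set.finite_singleton _, by rintro _ rfl; exact hone⟩
    | succ n ih =>
      refine ⟨ih.1.image2 _ (Set.finite_Iic m), ?_⟩
      rintro _ ⟨c, hc, j, hj, rfl⟩
      exact hstep _ _ ih.1 ih.2 c hc j hj
  have hmem : ∀ n, next (s n).1 (s n).2 ∈ A (s n).2 := fun n =>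
    hnext _ _ (invariant n).1 (invariant n).2
  exact ⟨fun n => (s (n + 1)).2, fun n => (s n).1, hmem 0, fun n => hmem (n + 1), rfl,
    fun n c hc j hj => ⟨c, hc, j, hj, rfl⟩, fun n c hc => ((invariant n).2 c hc).1⟩

theorem exists_seq_prod_mem {O : Set S} {A : S → Set S}
    (hU : ∀ i j, U.map T^[i] * U.map T^[j] = U.map T^[min i j]) (hA : ∀ y, A y ∈ U) (hO : O ∈ U)
    (m : ℕ) : ∃ x : ℕ → S, x 0 ∈ A 1 ∧ (∀ n, x (n + 1) ∈ A (x n)) ∧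
      ∀ j : ℕ → ℕ, (∀ n, j n ≤ m) → ∀ k, (∃ n < k, j n = 0) →
        ((List.range k).map fun n => T^[j n] (x n)).prod ∈ O := by
  have hone : Extendable T m U (fun l => {x | l = 0 → x ∈ O}) 1 1 := by
    refine ⟨fun h => absurd h one_ne_zero, fun j _ => ?_⟩
    filter_upwards [hO] with x hx hj
    obtain rfl : j = 0 := by lia
    rwa [one_mul]
  obtain ⟨x, C, hx0, hx, hC0, hC, hCO⟩ := exists_seq_extendable hU hA hone
  refine ⟨x, hx0, hx, fun j hj k hk => ?_⟩
  have hprod : ∀ k, ∃ l, (((List.range k).map fun n => T^[j n] (x n)).prod, l) ∈ C k ∧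
      ((∃ n < k, j n = 0) → l = 0) := fun k => by
    induction k with
    | zero => exact ⟨1, hC0, by simp⟩
    | succ k ih =>
      obtain ⟨l, hl, hl0⟩ := ih
      refine ⟨min l (j k), by simpa only [List.prod_range_succ] using hC k _ hl (j k) (hj k), ?_⟩
      rintro ⟨n, hn, hjn⟩
      obtain h | rfl := Nat.lt_succ_iff_lt_or_eq.1 hn
      · rw [hl0 ⟨n, h, hjn⟩, Nat.zero_min]
      · rw [hjn, Nat.min_zero]
  obtain ⟨l, hl, hl0⟩ := hprod k
  exact hCO k _ hl (hl0 hk)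

end GalvinGlazer

end Ultrafilters

section FIN

open Filter

attribute [local instance] Ultrafilter.mul Ultrafilter.semigroup

/-- The functions `ω → ω` as a monoid under pointwise maximum, which extends the addition of
functions with disjoint supports to a total operation. -/
def SupFun : Type := ℕ → ℕ

instance SupFun.instMonoid : Monoid SupFun where
  mul x y := fun i => max (x i) (y i)
  mul_assoc x y z := funext fun i => max_assoc (x i) (y i) (z i)
  one := fun _ => 0
  one_mul x := funext fun i => Nat.zero_max (x i)
  mul_one x := funext fun i => Nat.max_zero (x i)

theorem SupFun.one_apply (i : ℕ) : (1 : SupFun) i = 0 := rfl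

theorem SupFun.mul_apply (x y : SupFun) (i : ℕ) : (x * y) i = max (x i) (y i) := rfl

theorem SupFun.lt_prod_iff (l : List SupFun) (i c : ℕ) : c < l.prod i ↔ ∃ x ∈ l, c < x i := by
  induction l with
  | nil => simp [SupFun.one_apply]
  | cons x l ih => simp [SupFun.mul_apply, ih]

/-- The tetris operation. -/
def tetris : SupFun →ₙ* SupFun where
  toFun x := fun i => x i - 1
  map_mul' x y := funext fun i => (Nat.sub_max_sub_right (x i) (y i) 1).symm

theorem tetris_apply (x : SupFun) (i : ℕ) : tetris x i = x i - 1 := rfl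

theorem iterate_tetris_apply (j : ℕ) (x : SupFun) (i : ℕ) : tetris^[j] x i = x i - j := by
  induction j with
  | zero => rfl
  | succ j ih => rw [Function.iterate_succ_apply', tetris_apply, ih, Nat.sub_sub]

/-- The members of `FIN_k` whose support is contained in `[n, ∞)`. -/
def finTail (k n : ℕ) : Set SupFun := {x | x ∈ FINm k ∧ ∀ i < n, x i = 0}

/-- The filter on `FIN_k` generated by the tails `finTail k n`. -/
def finFilter (k : ℕ) : Filter SupFun := ⨅ n, 𝓟 (finTail k n)

theorem finFilter_hasBasis (k : ℕ) : (finFilter k).HasBasis (fun _ => True) (finTail k) :=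
  hasBasis_iInf_principal <| Antitone.directed_ge fun _ _ h _ hx =>
    ⟨hx.1, fun i hi => hx.2 i (hi.trans_le h)⟩

theorem mul_mem_finTail {k l n : ℕ} {x y : SupFun} (hx : x ∈ finTail k n)
    (hy : y ∈ finTail l n) : x * y ∈ finTail (max k l) n := by
  obtain ⟨⟨hxle, hxfin, s, hs⟩, hxn⟩ := hx
  obtain ⟨⟨hyle, hyfin, t, ht⟩, hyn⟩ := hy
  refine ⟨⟨fun i => max_le_max (hxle i) (hyle i), (hxfin.union hyfin).subset fun i hi => ?_, ?_⟩,
    fun i hi => ?_⟩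
  · simp only [Set.mem_ofPred_eq, SupFun.mul_apply, Set.mem_union] at hi ⊢
    lia
  · simp only [SupFun.mul_apply]
    rcases le_total k l with h | h
    · exact ⟨t, by have := hxle t; lia⟩
    · exact ⟨s, by have := hyle s; lia⟩
  · rw [SupFun.mul_apply, hxn i hi, hyn i hi, max_self]

theorem finTail_subset_image_tetris (k n : ℕ) : finTail k n ⊆ tetris '' finTail (k + 1) n := by
  rintro x ⟨⟨hxle, hxfin, t, ht⟩, hxn⟩
  obtain ⟨t, htn, ht⟩ : ∃ t ≥ n, x t = k := by
    rcases lt_or_ge t n with h | h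
    · exact ⟨n, le_rfl, by have := hxle n; have := hxn t h; lia⟩
    · exact ⟨t, h, ht⟩
  let y : SupFun := fun i => if x i ≠ 0 ∨ i = t then x i + 1 else 0
  have hy : ∀ i, y i = if x i ≠ 0 ∨ i = t then x i + 1 else 0 := fun _ => rfl
  refine ⟨y, ⟨⟨fun i => ?_, (hxfin.insert t).subset fun i hi => ?_, t, ?_⟩, fun i hi => ?_⟩,
    funext fun i => ?_⟩
  · have := hxle i
    grind
  · simp only [Set.mem_ofPred_eq, Set.mem_insert_iff] at hi ⊢
    grind
  · simp [hy, ht]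
  · have := hxn i hi
    grind
  · rw [tetris_apply]
    grind

theorem exists_gowers_ultrafilter (k : ℕ) :
    ∃ U : Ultrafilter SupFun, ↑U ≤ finFilter k ∧
      ∀ i j, U.map tetris^[i] * U.map tetris^[j] = U.map tetris^[min i j] := by
  have hpure : (pure 1 : Ultrafilter SupFun) * pure 1 = pure 1 :=
    Ultrafilter.coe_inj.1 (Filter.ext' fun p => by
      simp only [Ultrafilter.eventually_mul, Ultrafilter.coe_pure, eventually_pure, mul_one])
  obtain ⟨U, hUk, hUU, hTU, hUT⟩ := exists_idempotent_absorbing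
    (T := ultrafilterMapHom tetris) (F := fun k => {U | ↑U ≤ finFilter k})
    Ultrafilter.continuous_mul_left (continuous_ultrafilter_map tetris)
    (fun k => isClosed_ultrafilter_le (finFilter k))
    (fun {k l U V} hU hV => (finFilter_hasBasis _).ge_iff.2 fun n _ => by
      refine (Ultrafilter.eventually_mul U V (· ∈ finTail (max k l) n)).2 ?_
      filter_upwards [(finFilter_hasBasis k).ge_iff.1 hU n trivial] with x hx
      filter_upwards [(finFilter_hasBasis l).ge_iff.1 hV n trivial] with y hy
      exact mul_mem_finTail hx hy)
    (fun {k U} hU => exists_ultrafilter_map_eq <|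
      ((finFilter_hasBasis (k + 1)).map tetris).ge_iff.2 fun n _ =>
        mem_of_superset ((finFilter_hasBasis k).ge_iff.1 hU n trivial)
          (finTail_subset_image_tetris k n))
    ⟨pure 1, (finFilter_hasBasis 0).ge_iff.2 fun n _ =>
      ⟨⟨fun _ => le_rfl, by simp [SupFun.one_apply], 0, rfl⟩, fun _ _ => rfl⟩, hpure,
      Ultrafilter.map_pure _ _⟩ k
  refine ⟨U, hUk, fun i j => ?_⟩
  simpa only [ultrafilterMapHom, MulHom.coe_mk, iterate_ultrafilter_map] using
    iterate_mul_iterate_eq (ultrafilterMapHom tetris) hUU hTU hUT i j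

variable {m : ℕ}

theorem prod_iterate_tetris_eq_blockComb {x : ℕ → SupFun} {p : ℕ → ℕ} (hx : ∀ n i, x n i ≤ m)
    (hp : ∀ n, p n ≤ m) {k : ℕ} (hk : ∀ n, p n ≠ 0 → n < k) :
    ((List.range k).map fun n => tetris^[m - p n] (x n)).prod = blockComb m x p := by
  refine funext fun i => eq_of_forall_lt_iff fun c => ?_
  rw [SupFun.lt_prod_iff, lt_blockComb_iff hx hp]
  simp only [List.mem_map, List.mem_range, exists_exists_and_eq_and, iterate_tetris_apply]
  refine exists_congr fun n => ?_
  have := hx n i; have := hp n; have := hk n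
  lia

theorem exists_isBlockSeq_forall_blockComb_mem (hm : 0 < m) {U : Ultrafilter SupFun}
    (hUm : ↑U ≤ finFilter m)
    (hU : ∀ i j, U.map tetris^[i] * U.map tetris^[j] = U.map tetris^[min i j])
    {O : Set (ℕ → ℕ)} (hO : O ∈ U) :
    ∃ x, IsBlockSeq m x ∧ ∀ p ∈ FINm m, blockComb m x p ∈ O := by
  let A : SupFun → Set SupFun := fun y =>
    {x | x ∈ FINm m ∧ ({i | y i ≠ 0}.Finite → ∀ i j, y i ≠ 0 → x j ≠ 0 → i < j)}
  have hA : ∀ y, A y ∈ U := fun y => by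
    by_cases hy : {i | y i ≠ 0}.Finite
    · obtain ⟨N, hN⟩ := hy.bddAbove
      filter_upwards [(finFilter_hasBasis m).ge_iff.1 hUm (N + 1) trivial] with x hx
      refine ⟨hx.1, fun _ i j hi hj => ?_⟩
      by_contra hij
      exact hj (hx.2 j (by have : i ≤ N := hN hi; lia))
    · filter_upwards [(finFilter_hasBasis m).ge_iff.1 hUm 0 trivial] with x hx
      exact ⟨hx.1, fun h => absurd h hy⟩
  obtain ⟨x, hx0, hx, hprod⟩ := exists_seq_prod_mem hU hA hO m
  have hxFIN : ∀ n, x n ∈ FINm m := fun n => by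
    cases n with
    | zero => exact hx0.1
    | succ n => exact (hx n).1
  refine ⟨x, ⟨hxFIN, fun n => (hx n).2 (hxFIN n).2.1⟩, fun p ⟨hple, hpfin, n, hn⟩ => ?_⟩
  obtain ⟨N, hN⟩ := hpfin.bddAbove
  have hlt : ∀ n, p n ≠ 0 → n < N + 1 := fun n hn => Nat.lt_succ_of_le (hN hn)
  rw [← prod_iterate_tetris_eq_blockComb (fun n => (hxFIN n).1) hple hlt]
  exact hprod (fun n => m - p n) (fun n => Nat.sub_le m (p n)) (N + 1)
    ⟨n, hlt n (hn ▸ hm.ne'), by lia⟩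

theorem IsBlockSeq.comp (hm : 0 < m) {X x : ℕ → ℕ → ℕ} (hX : IsBlockSeq m X)
    (hx : IsBlockSeq m x) : IsBlockSeq m fun n => blockComb m X (x n) := by
  refine ⟨fun n => blockComb_mem_FINm hX.1 (hx.1 n), fun n i j hi hj => ?_⟩
  obtain ⟨k, hxk, hXk⟩ := exists_ne_zero_of_blockComb_ne_zero hX.le (hx.le n) hi
  obtain ⟨l, hxl, hXl⟩ := exists_ne_zero_of_blockComb_ne_zero hX.le (hx.le (n + 1)) hj
  exact hX.supp_lt hm (hx.2 n k l hxk hxl) hXk hXl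

/-- Gowers' theorem, relative to the span of a block sequence. -/
theorem exists_blockLe_homogeneous (hm : 0 < m) (X : BlockSeq m) (O : Set (ℕ → ℕ)) :
    ∃ Y : BlockSeq m, blockLe m Y X ∧
      (spanOn m Y.val Set.univ ⊆ O ∨ spanOn m Y.val Set.univ ⊆ Oᶜ) := by
  have exists_subset_of_mem : ∀ U : Ultrafilter SupFun, ↑U ≤ finFilter m →
      (∀ i j, U.map tetris^[i] * U.map tetris^[j] = U.map tetris^[min i j]) →
      ∀ Q, blockComb m X.val ⁻¹' Q ∈ U →
        ∃ Y : BlockSeq m, blockLe m Y X ∧ spanOn m Y.val Set.univ ⊆ Q := by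
    intro U hUm hU Q hQ
    obtain ⟨x, hx, hxQ⟩ := exists_isBlockSeq_forall_blockComb_mem hm hUm hU hQ
    refine ⟨⟨_, X.2.comp hm hx⟩, (blockLe_iff hm).2 fun n => ⟨x n, hx.1 n, by simp, rfl⟩, ?_⟩
    rintro _ ⟨p, hp, -, rfl⟩
    have : blockComb m X.val (blockComb m x p) ∈ Q := hxQ p hp
    rwa [← blockComb_blockComb X.2.le hx.le hp.1] at this
  obtain ⟨U, hUm, hU⟩ := exists_gowers_ultrafilter m
  rcases U.mem_or_compl_mem (blockComb m X.val ⁻¹' O) with h | h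
  · obtain ⟨Y, hYX, hYO⟩ := exists_subset_of_mem U hUm hU O h
    exact ⟨Y, hYX, Or.inl hYO⟩
  · obtain ⟨Y, hYX, hYO⟩ := exists_subset_of_mem U hUm hU Oᶜ h
    exact ⟨Y, hYX, Or.inr hYO⟩

end FIN

/-! ### The axioms for block sequences -/

section Approximations

variable {m : ℕ}

theorem length_blockR (n : ℕ) (A : BlockSeq m) : (blockR m n A).length = n :=
  List.length_ofFn

theorem mem_blockR {n : ℕ} {A : BlockSeq m} {x : ℕ → ℕ} :
    x ∈ blockR m n A ↔ ∃ i < n, A.val i = x := by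
  simp only [blockR, List.mem_ofFn, Fin.exists_iff, exists_prop]

theorem getD_blockR {i n : ℕ} (hi : i < n) (A : BlockSeq m) :
    (blockR m n A).getD i 0 = A.val i := by
  simp [blockR, hi]

theorem blockR_succ (n : ℕ) (A : BlockSeq m) : blockR m (n + 1) A = blockR m n A ++ [A.val n] :=
  List.ofFn_succ_last

theorem blockR_eq_iff {n : ℕ} {A B : BlockSeq m} :
    blockR m n A = blockR m n B ↔ ∀ i < n, A.val i = B.val i := by
  simp only [blockR, List.ofFn_inj, funext_iff, Fin.forall_iff]

theorem blockR_restrict {k n : ℕ} {A B : BlockSeq m} (h : blockR m k A = blockR m n B) :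
    k = n ∧ ∀ i ≤ k, blockR m i A = blockR m i B := by
  obtain rfl : k = n := by simpa only [length_blockR] using congrArg List.length h
  exact ⟨rfl, fun i hi => blockR_eq_iff.2 fun l hl => blockR_eq_iff.1 h l (hl.trans_le hi)⟩

theorem nodup_blockR (hm : 0 < m) (n : ℕ) (A : BlockSeq m) : (blockR m n A).Nodup :=
  List.nodup_ofFn.2 ((A.2.injective hm).comp Fin.val_injective)

theorem exists_forall_blockR_eq (A : ℕ → BlockSeq m)
    (hA : ∀ n, blockR m n (A (n + 1)) = blockR m n (A n)) :
    ∃ B : BlockSeq m, ∀ n, blockR m n B = blockR m n (A n) := by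
  have stable : ∀ {k n}, k ≤ n → blockR m k (A n) = blockR m k (A k) := fun {k n} hkn => by
    induction n, hkn using Nat.le_induction with
    | base => rfl
    | succ n hkn ih => exact ((blockR_restrict (hA n)).2 k hkn).trans ih
  have hval : ∀ {k n}, k < n → (A (k + 1)).val k = (A n).val k := fun {k n} hkn =>
    (blockR_eq_iff.1 (stable (Nat.succ_le_of_lt hkn)) k k.lt_succ_self).symm
  refine ⟨⟨fun k => (A (k + 1)).val k, fun k => (A (k + 1)).2.1 k, fun k i j hi hj => ?_⟩,
    fun n => blockR_eq_iff.2 fun k hk => hval hk⟩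
  replace hi : (A (k + 2)).val k i ≠ 0 := hval (show k < k + 2 by lia) ▸ hi
  exact (A (k + 2)).2.2 k i j hi hj

theorem finite_setOf_nodup_subset {β : Type*} {s : Set β} (hs : s.Finite) :
    {l : List β | l.Nodup ∧ ∀ x ∈ l, x ∈ s}.Finite := by
  classical
  have := hs.fintype
  refine (Set.finite_range fun l : {l : List s // l.Nodup} => l.1.map Subtype.val).subset ?_
  rintro l ⟨hl, hls⟩
  lift l to List s using hls
  exact ⟨⟨l, hl.of_map _⟩, rfl⟩

/-- The quasi-order `≤_fin` on finite approximations: every term of `a` lies in the span of the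
terms of `b`. -/
def blockLeFin (m : ℕ) (a b : List (ℕ → ℕ)) : Prop :=
  ∀ x ∈ a, x ∈ spanOn m (b.getD · 0) (Set.Iio b.length)

theorem spanOn_getD_blockR (n : ℕ) (A : BlockSeq m) :
    spanOn m ((blockR m n A).getD · 0) (Set.Iio (blockR m n A).length) =
      spanOn m A.val (Set.Iio n) := by
  rw [length_blockR]
  refine spanOn_congr (fun i => ?_) A.2.le fun i hi => getD_blockR hi A
  rcases lt_or_ge i n with hi | hi
  · rw [getD_blockR hi]
    exact A.2.le i
  · rw [List.getD_eq_default _ _ (by rwa [length_blockR])]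
    exact fun _ => Nat.zero_le m

theorem blockLeFin_blockR {n k : ℕ} {A B : BlockSeq m} :
    blockLeFin m (blockR m n A) (blockR m k B) ↔
      ∀ i < n, A.val i ∈ spanOn m B.val (Set.Iio k) := by
  simp only [blockLeFin, spanOn_getD_blockR, mem_blockR, forall_exists_index, and_imp,
    forall_apply_eq_imp_iff₂]

theorem finite_setOf_blockLeFin (hm : 0 < m) (b : List (ℕ → ℕ)) :
    {a | (∃ n A, blockR m n A = a) ∧ blockLeFin m a b}.Finite := by
  refine (finite_setOf_nodup_subset (finite_spanOn_Iio (m := m) (b.getD · 0) b.length)).subset ?_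
  rintro _ ⟨⟨n, A, rfl⟩, h⟩
  exact ⟨nodup_blockR hm n A, h⟩

theorem blockLe_refl (hm : 0 < m) (A : BlockSeq m) : blockLe m A A :=
  (blockLe_iff hm).2 fun _ => mem_spanOn_self A.2.le (Set.mem_univ _)

theorem blockLe_trans (hm : 0 < m) {A B C : BlockSeq m} (hAB : blockLe m A B)
    (hBC : blockLe m B C) : blockLe m A C :=
  (blockLe_iff hm).2 fun n => spanOn_subset_spanOn B.2.le C.2.le
    (fun k _ => (blockLe_iff hm).1 hBC k) ((blockLe_iff hm).1 hAB n)

theorem blockLe_iff_blockLeFin (hm : 0 < m) {A B : BlockSeq m} :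
    blockLe m A B ↔ ∀ n, ∃ k, blockLeFin m (blockR m n A) (blockR m k B) := by
  rw [blockLe_iff hm]
  simp only [blockLeFin_blockR]
  constructor
  · intro h n
    choose N hN using fun i => exists_mem_spanOn_Iio (h i)
    exact ⟨(Finset.range n).sup N, fun i hi =>
      spanOn_mono (Set.Iio_subset_Iio (Finset.le_sup (Finset.mem_range.2 hi))) (hN i)⟩
  · intro h n
    obtain ⟨k, hk⟩ := h (n + 1)
    exact spanOn_mono (Set.subset_univ _) (hk n n.lt_succ_self)

end Approximations

section Amalgamation

variable {m : ℕ}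

theorem mem_spanOn_Ici (hm : 0 < m) {A C : BlockSeq m} {d k l : ℕ} (hCA : blockLe m C A)
    (hd : ∀ e < d, ¬ blockLeFin m (blockR m k C) (blockR m e A)) (hkl : k ≤ l) :
    C.val l ∈ spanOn m A.val (Set.Ici d) := by
  -- A term of `C` that uses the `n`-th term of `A` is nonzero at the peak of that term, so terms
  -- of `C` that precede `C l` use only indices below those used by `C l`.
  obtain ⟨peak, hmono, hpeak⟩ := A.2.exists_peak hm
  have comb_peak_ne : ∀ {p : ℕ → ℕ} {n}, p ∈ FINm m → p n ≠ 0 →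
      blockComb m A.val p (peak n) ≠ 0 := fun {p n} hp hn =>
    Nat.pos_iff_ne_zero.1 <| (lt_blockComb_iff A.2.le hp.1).2 ⟨n, by rw [hpeak]; lia⟩
  rw [blockLe_iff hm] at hCA
  obtain ⟨p, hp, -, hpl⟩ := hCA l
  refine ⟨p, hp, fun n hn => ?_, hpl⟩
  by_contra hnd
  refine hd n (not_le.1 hnd) (blockLeFin_blockR.2 fun j hj => ?_)
  obtain ⟨q, hq, -, hqj⟩ := hCA j
  refine ⟨q, hq, fun n' hn' => ?_, hqj⟩
  have hlt : peak n' < peak n := C.2.supp_lt hm (hj.trans_le hkl)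
    (hqj ▸ comb_peak_ne hq hn') (hpl ▸ comb_peak_ne hp hn)
  exact hmono.lt_iff_lt.1 hlt

/-- The depth of the finite block sequence `a` in `B`. -/
noncomputable abbrev blockDepth (B : BlockSeq m) (a : List (ℕ → ℕ)) : ℕ :=
  depth (blockLeFin m) (blockR m) B a

theorem mem_spanOn_Iio_blockDepth (hm : 0 < m) {B C : BlockSeq m} {k i : ℕ} (hCB : blockLe m C B)
    (hi : i < k) :
    C.val i ∈ spanOn m B.val (Set.Iio (blockDepth B (blockR m k C))) :=
  blockLeFin_blockR.1 (Nat.sInf_mem ((blockLe_iff_blockLeFin hm).1 hCB k)) i hi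

theorem mem_spanOn_Ici_blockDepth (hm : 0 < m) {a : List (ℕ → ℕ)} {A B C : BlockSeq m} {k l : ℕ}
    (hAB : blockR m (blockDepth B a) A = blockR m (blockDepth B a) B)
    (hCA : blockLe m C A) (hCa : blockR m k C = a) (hkl : k ≤ l) :
    C.val l ∈ spanOn m A.val (Set.Ici (blockDepth B a)) := by
  refine mem_spanOn_Ici hm hCA (fun e he => ?_) hkl
  rw [(blockR_restrict hAB).2 e he.le, hCa]
  exact Nat.notMem_of_lt_sInf he

theorem nonempty_ellSet_of_blockR_eq (hm : 0 < m) {a : List (ℕ → ℕ)} {A B : BlockSeq m}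
    (h : (EllSet (blockLe m) (blockR m) a B).Nonempty)
    (hAB : blockR m (blockDepth B a) A = blockR m (blockDepth B a) B) :
    (EllSet (blockLe m) (blockR m) a A).Nonempty := by
  obtain ⟨C, hCB, k, rfl⟩ := h
  have hCA : ∀ i < k, C.val i ∈ spanOn m A.val (Set.Iio (blockDepth B (blockR m k C))) :=
    fun i hi => (spanOn_congr A.2.le B.2.le (blockR_eq_iff.1 hAB)).symm ▸
      mem_spanOn_Iio_blockDepth hm hCB hi
  obtain ⟨W, hlow, hhigh⟩ := exists_splice C A k (blockDepth B (blockR m k C))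
    fun n hn i j hi hj => by
      obtain ⟨t, ht, hAt⟩ := exists_ne_zero_of_mem_spanOn A.2.le (hCA n hn) hi
      exact A.2.supp_lt hm ht hAt hj
  refine ⟨W, (blockLe_iff hm).2 fun n => ?_, k, blockR_eq_iff.2 hlow⟩
  rcases lt_or_ge n k with hn | hn
  · exact hlow n hn ▸ spanOn_mono (Set.subset_univ _) (hCA n hn)
  · obtain ⟨t, rfl⟩ := Nat.exists_eq_add_of_le hn
    exact hhigh t ▸ mem_spanOn_self A.2.le (Set.mem_univ _)

theorem exists_forall_ne_zero_lt (B : BlockSeq m) (d : ℕ) :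
    ∃ N, ∀ k < d, ∀ i, B.val k i ≠ 0 → i < N := by
  obtain ⟨N, hN⟩ := ((Set.finite_Iio d).biUnion fun k _ => (B.2.1 k).2.1).bddAbove
  exact ⟨N + 1, fun k hk i hi => Nat.lt_succ_of_le (hN (Set.mem_biUnion hk hi))⟩

theorem exists_mem_ellSet_splice (hm : 0 < m) {B Z : BlockSeq m} {d N : ℕ}
    (sep : ∀ k < d, ∀ i j, B.val k i ≠ 0 → Z.val N j ≠ 0 → i < j)
    (hZ : blockLe m Z B) :
    ∃ W ∈ EllSet (blockLe m) (blockR m) (blockR m d B) B,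
      blockR m d W = blockR m d B ∧ spanOn m W.val (Set.Ici d) ⊆ spanOn m Z.val Set.univ := by
  obtain ⟨W, hlow, hhigh⟩ := exists_splice B Z d N sep
  have hWB : blockR m d W = blockR m d B := blockR_eq_iff.2 hlow
  refine ⟨W, ⟨(blockLe_iff hm).2 fun n => ?_, d, hWB⟩, hWB,
    spanOn_subset_spanOn W.2.le Z.2.le fun n hn => ?_⟩
  · rcases lt_or_ge n d with hn | hn
    · exact hlow n hn ▸ mem_spanOn_self B.2.le (Set.mem_univ _)
    · obtain ⟨t, rfl⟩ := Nat.exists_eq_add_of_le hn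
      exact hhigh t ▸ (blockLe_iff hm).1 hZ (N + t)
  · obtain ⟨t, rfl⟩ := Nat.exists_eq_add_of_le hn
    exact hhigh t ▸ mem_spanOn_self Z.2.le (Set.mem_univ _)

theorem exists_mem_ellSet_ellSet_subset (hm : 0 < m) {a : List (ℕ → ℕ)} {A B : BlockSeq m}
    (hAB : blockLe m A B) (h : (EllSet (blockLe m) (blockR m) a A).Nonempty) :
    ∃ A' ∈ EllSet (blockLe m) (blockR m) (blockR m (blockDepth B a) B) B,
      EllSet (blockLe m) (blockR m) a A' ⊆ EllSet (blockLe m) (blockR m) a A := by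
  obtain ⟨C, hCA, k, hC⟩ := h
  obtain ⟨N, hN⟩ := exists_forall_ne_zero_lt B (blockDepth B a)
  obtain ⟨W, hW, hWB, hspan⟩ := exists_mem_ellSet_splice hm (N := N)
    (fun k hk i j hi hj => (hN k hk i hi).trans_le (A.2.index_le hm hj)) hAB
  refine ⟨W, hW, fun C' ⟨hC'W, n, hC'⟩ => ⟨(blockLe_iff hm).2 fun i => ?_, n, hC'⟩⟩
  rcases lt_or_ge i n with hi | hi
  · obtain ⟨rfl, -⟩ := blockR_restrict (hC'.trans hC.symm)
    rw [blockR_eq_iff.1 (hC'.trans hC.symm) i hi]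
    exact (blockLe_iff hm).1 hCA i
  · exact hspan (mem_spanOn_Ici_blockDepth hm hWB hC'W hC' hi)

theorem exists_homogeneous_mem_ellSet (hm : 0 < m) (a : List (ℕ → ℕ)) (B : BlockSeq m)
    (O : Set (List (ℕ → ℕ))) :
    ∃ A ∈ EllSet (blockLe m) (blockR m) (blockR m (blockDepth B a) B) B,
      (∀ C ∈ EllSet (blockLe m) (blockR m) a A, ∀ n, blockR m n C = a → blockR m (n + 1) C ∈ O) ∨
      (∀ C ∈ EllSet (blockLe m) (blockR m) a A, ∀ n, blockR m n C = a →
        blockR m (n + 1) C ∉ O) := by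
  let X : BlockSeq m := ⟨_, B.2.tail (blockDepth B a)⟩
  obtain ⟨Y, hYX, hY⟩ := exists_blockLe_homogeneous hm X {y | a ++ [y] ∈ O}
  have hXB : blockLe m X B :=
    (blockLe_iff hm).2 fun n => mem_spanOn_self (X := B.val) B.2.le (Set.mem_univ _)
  obtain ⟨W, hW, hWB, hspan⟩ := exists_mem_ellSet_splice hm (N := 0)
    (fun k hk i j hi hj => by
      obtain ⟨n, -, hn⟩ := exists_ne_zero_of_mem_spanOn X.2.le ((blockLe_iff hm).1 hYX 0) hj
      exact B.2.supp_lt hm (hk.trans_le (Nat.le_add_right _ n)) hi hn)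
    (blockLe_trans hm hYX hXB)
  have next_mem : ∀ C ∈ EllSet (blockLe m) (blockR m) a W, ∀ n, blockR m n C = a →
      C.val n ∈ spanOn m Y.val Set.univ := fun C hC n hn =>
    hspan (mem_spanOn_Ici_blockDepth hm hWB hC.1 hn le_rfl)
  refine ⟨W, hW, hY.imp (fun hYO C hC n hn => ?_) fun hYO C hC n hn => ?_⟩
  all_goals
    rw [blockR_succ, hn]
    exact hYO (next_mem C hC n hn)

end Amalgamation

theorem ramseyAxioms_blockSeq {m : ℕ} (hm : 0 < m) :
    RamseyAxioms (blockLe m) (blockR m) (blockLeFin m) where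
  refl := blockLe_refl hm
  trans := blockLe_trans hm
  restrict := blockR_restrict
  closed := exists_forall_blockR_eq
  finite_leFin := finite_setOf_blockLeFin hm
  le_iff := blockLe_iff_blockLeFin hm
  initial {i n k A B} h hin := ⟨k, le_rfl, blockLeFin_blockR.2 fun j hj =>
    blockLeFin_blockR.1 h j (hj.trans_le hin)⟩
  amalgamate {a A B} h hA := by
    obtain ⟨n, hn⟩ := hA.2
    obtain ⟨rfl, -⟩ := blockR_restrict hn
    exact nonempty_ellSet_of_blockR_eq hm h hn
  amalgamate_le := exists_mem_ellSet_ellSet_subset hm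
  pigeonhole {a B} _ := exists_homogeneous_mem_ellSet hm a B

/-- **Theorem (Todorcevic).** For every `m > 0`, `(FIN_m^[∞], ≤, r)` is a
topological Ramsey space. -/
theorem finm_is_topological_ramsey_space (m : ℕ) (hm : 0 < m) :
    IsTopRamseySpace (blockLe m) (blockR m) :=
  (ramseyAxioms_blockSeq hm).isTopRamseySpace
end

section
/- For every t < ω, the triple (S_t(ω;ω), ≤, r) is a topological Ramsey space. -/
/-!
A basic set `[r(n,A), A]` is a cone: it consists of all `C ∘ A` where the rigid surjection `C` fixes
the integers below some `s`. Fusion: a property of cones which is inherited by smaller cones, and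
which every cone acquires by shrinking, can be secured for all cones below some `B` simultaneously,
because each stage of the construction has only finitely many stems to treat.

The pigeonhole principle for cones is the Carlson–Simpson theorem on left variable words. Let the
ultrafilter `w` on words lie in a minimal left ideal, and let `x = v * b * w` be an idempotent
ultrafilter on variable words, with `v` the variable. Substituting the letter `l` in `x` gives
ultrafilters with `w * x(l) = w` and `x(l) * x(l') = x(l)`. Hence, given a set in `w`, some word can
be extended again and again by left variable words so that all instances stay in that set.

For an open set `U`, fusion and the pigeonhole principle give `B` such that every cone below `B` is
contained in `U` or has no cone of the next level that is contained in `U`. So if no cone of the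
first level is contained in `U`, then none of any level is, and no element below `B` is in `U`,
since `U` is open. A second fusion shows that countable unions of Ramsey null sets are Ramsey null,
and the sets with the property of Baire follow as in Ellentuck's theorem.
-/

open Topology

/-- The space `S_t(ω;ω)` of parameter words: surjections `A : t+ω → t+ω`
which are the identity below `t` and whose classes are ordered by their
minima (`min A^{-1}({j}) < min A^{-1}({j'})` for `j < j'`). -/
def St (t : ℕ) : Set (ℕ → ℕ) :=
  {A | (∀ j, ∃ i, A i = j) ∧ (∀ i < t, A i = i) ∧
       ∀ j j', j < j' → ∃ i, A i = j ∧ ∀ i', A i' = j' → i < i'}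

/-- The space `S_t(ω;k)`: surjections `A : t+ω → t+k` which are the identity
below `t` and whose classes are ordered by their minima. -/
def StK (t k : ℕ) : Set (ℕ → ℕ) :=
  {A | (∀ i, A i < t + k) ∧ (∀ j < t + k, ∃ i, A i = j) ∧ (∀ i < t, A i = i) ∧
       ∀ j j', j < j' → j' < t + k → ∃ i, A i = j ∧ ∀ i', A i' = j' → i < i'}

/-- The composition `(A·B)(i) = B(A(i))`. -/
def compP (A B : ℕ → ℕ) : ℕ → ℕ := fun i => B (A i)

/-- The approximation map: `r(0,A) = ∅` and, for `n > 0`, `r(n,A)` is the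
restriction of `A` to the initial segment `{0, …, min A^{-1}({t+n}) − 1}`. -/
noncomputable def rP (t : ℕ) (n : ℕ) (A : ℕ → ℕ) : List ℕ :=
  if n = 0 then [] else List.ofFn fun i : Fin (sInf {i | A i = t + n}) => A i

section EllentuckTheory

variable {R α : Type*} {le : R → R → Prop} {r : ℕ → R → α}

theorem isOpen_ellSet (a : α) (A : R) : IsOpen[EllTop le r] (EllSet le r a A) :=
  TopologicalSpace.isOpen_generateFrom_of_mem ⟨a, A, rfl⟩

theorem IsRamseyNullSet.mono {S T : Set R} (hT : IsRamseyNullSet le r T) (hST : S ⊆ T) :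
    IsRamseyNullSet le r S := by
  intro a A hne
  obtain ⟨B, hB, hBT⟩ := hT a A hne
  exact ⟨B, hB, Set.subset_empty_iff.1
    ((Set.inter_subset_inter_right _ hST).trans_eq hBT)⟩

theorem ellSet_subset_ellSet [IsTrans R le] {A B : R} (a : α) (h : le B A) :
    EllSet le r a B ⊆ EllSet le r a A :=
  fun _ ⟨hXB, hXa⟩ => ⟨_root_.trans hXB h, hXa⟩

theorem mem_ellSet_self [Std.Refl le] {a : α} {A B : R} (h : B ∈ EllSet le r a A) :
    B ∈ EllSet le r a B :=
  ⟨refl B, h.2⟩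

theorem exists_ellSet_subset_of_isOpen [IsTrans R le]
    (hanti : ∀ A, Antitone fun n => EllSet le r (r n A) A) {U : Set R}
    (hU : IsOpen[EllTop le r] U) {A : R} (hA : A ∈ U) :
    ∃ n, EllSet le r (r n A) A ⊆ U := by
  induction hU with
  | basic U hU =>
    obtain ⟨a, B, rfl⟩ := hU
    obtain ⟨hAB, n, rfl⟩ := hA
    exact ⟨n, ellSet_subset_ellSet _ hAB⟩
  | univ => exact ⟨0, Set.subset_univ _⟩
  | inter U V _ _ ihU ihV =>
    obtain ⟨m, hm⟩ := ihU hA.1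
    obtain ⟨n, hn⟩ := ihV hA.2
    exact ⟨max m n, Set.subset_inter ((hanti A (le_max_left m n)).trans hm)
      ((hanti A (le_max_right m n)).trans hn)⟩
  | sUnion 𝒰 _ ih =>
    obtain ⟨U, hU, hAU⟩ := hA
    obtain ⟨n, hn⟩ := ih U hU hAU
    exact ⟨n, hn.trans (Set.subset_sUnion_of_mem hU)⟩

theorem isRamseyNullSet_of_isNowhereDense [Std.Refl le]
    (hopen : ∀ U, IsOpen[EllTop le r] U → IsRamseySet le r U) {S : Set R}
    (hS : @IsNowhereDense R (EllTop le r) S) : IsRamseyNullSet le r S := by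
  let := EllTop le r
  refine IsRamseyNullSet.mono (fun a A hne => ?_) (subset_closure (s := S))
  obtain ⟨B, hB, hsub | hdisj⟩ := hopen _ (isClosed_closure (s := S)).isOpen_compl a A hne
  · exact ⟨B, hB, (Set.subset_compl_iff_disjoint_right.1 hsub).inter_eq⟩
  · have hBS : EllSet le r a B ⊆ closure S := fun X hX => by
      by_contra hXS
      exact Set.eq_empty_iff_forall_notMem.1 hdisj X ⟨hX, hXS⟩
    exact (Set.eq_empty_iff_forall_notMem.1 hS B
      (interior_maximal hBS (isOpen_ellSet a B) (mem_ellSet_self hB))).elim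

theorem isRamseyNullSet_of_isMeagre [Std.Refl le]
    (hopen : ∀ U, IsOpen[EllTop le r] U → IsRamseySet le r U)
    (hunion : ∀ N : ℕ → Set R, (∀ k, IsRamseyNullSet le r (N k)) →
      IsRamseyNullSet le r (⋃ k, N k))
    {S : Set R} (hS : @IsMeagre R (EllTop le r) S) : IsRamseyNullSet le r S := by
  let := EllTop le r
  obtain ⟨𝒮, hnwd, hcount, hcover⟩ := isMeagre_iff_countable_union_isNowhereDense.1 hS
  obtain ⟨N, hN⟩ := (hcount.insert ∅).exists_eq_range (Set.insert_nonempty _ _)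
  refine (hunion N fun k => isRamseyNullSet_of_isNowhereDense hopen ?_).mono
    (hcover.trans (Set.sUnion_subset fun T hT => ?_))
  · rcases (hN ▸ Set.mem_range_self k : N k ∈ insert ∅ 𝒮) with hk | hk
    · exact hk ▸ isNowhereDense_empty
    · exact hnwd _ hk
  · obtain ⟨k, rfl⟩ := (hN ▸ Set.mem_insert_of_mem _ hT : T ∈ Set.range N)
    exact Set.subset_iUnion N k

theorem isTopRamseySpace_of_isOpen_of_iUnion [IsPreorder R le]
    (hopen : ∀ U, IsOpen[EllTop le r] U → IsRamseySet le r U)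
    (hunion : ∀ N : ℕ → Set R, (∀ k, IsRamseyNullSet le r (N k)) →
      IsRamseyNullSet le r (⋃ k, N k)) :
    IsTopRamseySpace le r := by
  refine ⟨?_, fun S => isRamseyNullSet_of_isMeagre hopen hunion⟩
  rintro _ ⟨U, M, hU, hM, rfl⟩ a A hne
  obtain ⟨B, hB, hBM⟩ := isRamseyNullSet_of_isMeagre hopen hunion hM a A hne
  obtain ⟨C, hC, hCU⟩ := hopen U hU a B ⟨B, mem_ellSet_self hB⟩
  have hnotM : ∀ X ∈ EllSet le r a C, X ∉ M := fun X hX hXM =>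
    Set.eq_empty_iff_forall_notMem.1 hBM X ⟨ellSet_subset_ellSet a hC.1 hX, hXM⟩
  refine ⟨C, ellSet_subset_ellSet a hB.1 hC, hCU.imp (fun hsub X hX => ?_) fun hdisj => ?_⟩
  · exact Or.inl ⟨hsub hX, hnotM X hX⟩
  · refine Set.eq_empty_iff_forall_notMem.2 fun X ⟨hX, hXS⟩ => ?_
    rcases hXS with ⟨hXU, -⟩ | ⟨hXM, -⟩
    · exact Set.eq_empty_iff_forall_notMem.1 hdisj X ⟨hX, hXU⟩
    · exact hnotM X hX hXM

end EllentuckTheory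

/-- Surjections `ℕ → ℕ` fixing every `i < t` in which every value first occurs after all smaller
values have occurred: the elements of `St t`, see `mem_St_iff`. -/
structure RigidSurj (t : ℕ) (A : ℕ → ℕ) : Prop where
  fix : ∀ i < t, A i = i
  grow : ∀ i, ∀ j < A i, ∃ i' < i, A i' = j
  surj : ∀ j, ∃ i, A i = j

theorem mem_St_iff {t : ℕ} {A : ℕ → ℕ} : A ∈ St t ↔ RigidSurj t A := by
  classical
  constructor
  · rintro ⟨hsurj, hfix, hmin⟩
    refine ⟨hfix, fun i j hj => ?_, hsurj⟩
    obtain ⟨i', hi', hlt⟩ := hmin j (A i) hj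
    exact ⟨i', hlt i rfl, hi'⟩
  · intro h
    refine ⟨h.surj, h.fix, fun j j' hj => ⟨Nat.find (h.surj j), Nat.find_spec (h.surj j), ?_⟩⟩
    rintro i' rfl
    obtain ⟨i, hi, hij⟩ := h.grow i' j hj
    exact (Nat.find_min' (h.surj j) hij).trans_lt hi

/-- `min A⁻¹({j})`, with the junk value `0` when `A` omits `j`. -/
noncomputable def firstOcc (A : ℕ → ℕ) (j : ℕ) : ℕ := sInf {i | A i = j}

theorem firstOcc_apply_le (A : ℕ → ℕ) (i : ℕ) : firstOcc A (A i) ≤ i :=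
  Nat.sInf_le rfl

theorem firstOcc_eq {A : ℕ → ℕ} {m j : ℕ} (hm : A m = j) (hne : ∀ i < m, A i ≠ j) :
    firstOcc A j = m :=
  le_antisymm (Nat.sInf_le hm)
    (le_csInf ⟨m, hm⟩ fun _ hi => not_lt.1 fun h => hne _ h hi)

/-- The restriction of `A` to `{0, …, min A⁻¹({j}) - 1}`, as the list of its values. -/
noncomputable def initSeg (A : ℕ → ℕ) (j : ℕ) : List ℕ := (List.range (firstOcc A j)).map A

namespace RigidSurj

variable {s t j : ℕ} {A B C : ℕ → ℕ}

theorem id (t : ℕ) : RigidSurj t id :=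
  ⟨fun _ _ => rfl, fun _ j hj => ⟨j, hj, rfl⟩, fun j => ⟨j, rfl⟩⟩

theorem mono (hA : RigidSurj t A) (hst : s ≤ t) : RigidSurj s A :=
  ⟨fun i hi => hA.fix i (hi.trans_le hst), hA.grow, hA.surj⟩

theorem comp (hC : RigidSurj t C) (hA : RigidSurj t A) : RigidSurj t (C ∘ A) where
  fix i hi := by rw [Function.comp_apply, hA.fix i hi, hC.fix i hi]
  grow i j hj := by
    obtain ⟨x, hx, rfl⟩ := hC.grow _ j hj
    obtain ⟨i', hi', rfl⟩ := hA.grow i x hx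
    exact ⟨i', hi', rfl⟩
  surj := Function.Surjective.comp hC.surj hA.surj

theorem apply_le (hA : RigidSurj t A) (i : ℕ) : A i ≤ i := by
  induction i using Nat.strong_induction_on with
  | _ i ih =>
    by_contra! hlt
    obtain ⟨i', hi', he⟩ := hA.grow i i hlt
    exact (ih i' hi').not_gt (he ▸ hi')

theorem succ (hA : RigidSurj t A) (ht : A t = t) : RigidSurj (t + 1) A where
  fix i hi := (Nat.lt_succ_iff_lt_or_eq.1 hi).elim (hA.fix i) fun h => h ▸ ht
  grow := hA.grow
  surj := hA.surj

theorem apply_firstOcc (hA : RigidSurj t A) (j : ℕ) : A (firstOcc A j) = j :=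
  Nat.sInf_mem (hA.surj j)

theorem apply_lt_of_lt_firstOcc (hA : RigidSurj t A) {i : ℕ} (hi : i < firstOcc A j) :
    A i < j := by
  by_contra! hle
  have hne : A i ≠ j := fun h => hi.not_ge (h ▸ firstOcc_apply_le A i)
  obtain ⟨i', hi', rfl⟩ := hA.grow i j (hle.lt_of_ne' hne)
  exact (hi'.trans hi).not_ge (firstOcc_apply_le A i')

theorem firstOcc_strictMono (hA : RigidSurj t A) : StrictMono (firstOcc A) := by
  intro j k hjk
  obtain ⟨i, hi, rfl⟩ := hA.grow (firstOcc A k) j (by rwa [hA.apply_firstOcc])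
  exact (firstOcc_apply_le A i).trans_lt hi

theorem le_firstOcc (hA : RigidSurj t A) (j : ℕ) : j ≤ firstOcc A j :=
  hA.firstOcc_strictMono.le_apply

theorem firstOcc_comp (hC : RigidSurj s C) (hA : RigidSurj t A) (j : ℕ) :
    firstOcc (C ∘ A) j = firstOcc A (firstOcc C j) := by
  refine firstOcc_eq (by simp [hA.apply_firstOcc, hC.apply_firstOcc]) fun i hi => ?_
  exact (hC.apply_lt_of_lt_firstOcc (hA.apply_lt_of_lt_firstOcc hi)).ne

theorem mem_initSeg (hA : RigidSurj t A) {x : ℕ} : x ∈ initSeg A j ↔ x < j := by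
  simp only [initSeg, List.mem_map, List.mem_range]
  constructor
  · rintro ⟨i, hi, rfl⟩
    exact hA.apply_lt_of_lt_firstOcc hi
  · exact fun hx => ⟨firstOcc A x, hA.firstOcc_strictMono hx, hA.apply_firstOcc x⟩

theorem initSeg_injective (hA : RigidSurj t A) (hB : RigidSurj t B) {k : ℕ}
    (h : initSeg A j = initSeg B k) : j = k :=
  eq_of_forall_lt_iff fun x => by rw [← hA.mem_initSeg, h, hB.mem_initSeg]

theorem initSeg_comp (hC : RigidSurj s C) (hA : RigidSurj t A) (j : ℕ) :
    initSeg (C ∘ A) j = (initSeg A (firstOcc C j)).map C := by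
  rw [initSeg, initSeg, List.map_map, hC.firstOcc_comp hA]

theorem initSeg_comp_eq_iff (hC : RigidSurj t C) (hA : RigidSurj t A) :
    initSeg (C ∘ A) j = initSeg A j ↔ RigidSurj (j + 1) C := by
  rw [hC.initSeg_comp hA]
  constructor
  · intro h
    have hfirst : firstOcc C j = j := hA.firstOcc_strictMono.injective (by
      simpa [initSeg] using congrArg List.length h)
    rw [hfirst] at h
    have hfix : ∀ i < j, C i = i := fun i hi =>
      List.map_eq_map_iff.1 (h.trans (List.map_id _).symm) i (hA.mem_initSeg.2 hi)
    exact succ ⟨hfix, hC.grow, hC.surj⟩ (by simpa [hfirst] using hC.apply_firstOcc j)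
  · intro hj
    have hfirst : firstOcc C j = j := firstOcc_eq (hj.fix j j.lt_succ_self) fun i hi => by
      rw [hj.fix i (hi.trans j.lt_succ_self)]
      exact hi.ne
    rw [hfirst]
    exact (List.map_congr_left fun i hi =>
      hj.fix i ((hA.mem_initSeg.1 hi).trans j.lt_succ_self)).trans (List.map_id _)

theorem exists_eq_comp (hA : RigidSurj s A) (hC : RigidSurj t C) (hCA : C.FactorsThrough A)
    (hfix : ∀ i, A i < j → C i = A i) : ∃ E, RigidSurj j E ∧ C = E ∘ A := by
  have hfactor : ∀ i, C (firstOcc A (A i)) = C i := fun i => hCA (hA.apply_firstOcc (A i))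
  refine ⟨C ∘ firstOcc A, ⟨fun i hi => ?_, fun i x hx => ?_, fun x => ?_⟩,
    funext fun i => (hfactor i).symm⟩
  · rw [Function.comp_apply, hfix _ (by rwa [hA.apply_firstOcc]), hA.apply_firstOcc]
  · obtain ⟨i', hi', rfl⟩ := hC.grow _ x hx
    exact ⟨A i', hA.apply_lt_of_lt_firstOcc hi', hfactor i'⟩
  · obtain ⟨i, rfl⟩ := hC.surj x
    exact ⟨A i, hfactor i⟩

end RigidSurj

/-- Stems encode finite approximations, of length `m`, as total functions on `ℕ`: the values of `a`
before `m` are less than `a m`, and from `m` on `a` is a shift. -/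
structure IsStem (m : ℕ) (a : ℕ → ℕ) : Prop where
  lt : ∀ i < m, a i < a m
  shift : ∀ i, m ≤ i → a i + m = i + a m

/-- The stem which agrees with `A` before the first occurrence of `j`. -/
noncomputable def stem (A : ℕ → ℕ) (j i : ℕ) : ℕ :=
  if i < firstOcc A j then A i else i - firstOcc A j + j

theorem stem_of_lt {A : ℕ → ℕ} {i j : ℕ} (hi : i < firstOcc A j) : stem A j i = A i := if_pos hi

theorem stem_of_le {A : ℕ → ℕ} {i j : ℕ} (hi : firstOcc A j ≤ i) :
    stem A j i = i - firstOcc A j + j := if_neg hi.not_gt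

theorem stem_firstOcc (A : ℕ → ℕ) (j : ℕ) : stem A j (firstOcc A j) = j := by
  rw [stem_of_le le_rfl, Nat.sub_self, zero_add]

namespace RigidSurj

variable {t : ℕ} {A : ℕ → ℕ}

theorem isStem_stem (hA : RigidSurj t A) (j : ℕ) : IsStem (firstOcc A j) (stem A j) where
  lt i hi := by
    rw [stem_of_lt hi, stem_firstOcc]
    exact hA.apply_lt_of_lt_firstOcc hi
  shift i hi := by
    rw [stem_of_le hi, stem_firstOcc]
    omega

theorem rigidSurj_stem (hA : RigidSurj t A) (hj : t ≤ j) : RigidSurj t (stem A j) := by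
  have hbelow : ∀ x < j, stem A j (firstOcc A x) = x := fun x hx => by
    rw [stem_of_lt (hA.firstOcc_strictMono hx), hA.apply_firstOcc]
  have habove : ∀ x, j ≤ x → stem A j (x - j + firstOcc A j) = x := fun x hx => by
    rw [stem_of_le (by omega)]
    omega
  refine ⟨fun i hi => ?_, fun i x hx => ?_, fun x => ?_⟩
  · rw [stem_of_lt (hi.trans_le (hj.trans (hA.le_firstOcc j))), hA.fix i hi]
  · rcases lt_or_ge i (firstOcc A j) with hi | hi
    · rw [stem_of_lt hi] at hx
      obtain ⟨i', hi', rfl⟩ := hA.grow i x hx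
      exact ⟨i', hi', stem_of_lt (hi'.trans hi)⟩
    · rw [stem_of_le hi] at hx
      rcases lt_or_ge x j with hxj | hxj
      · exact ⟨_, (hA.firstOcc_strictMono hxj).trans_le hi, hbelow x hxj⟩
      · exact ⟨_, by omega, habove x hxj⟩
  · rcases lt_or_ge x j with hxj | hxj
    · exact ⟨_, hbelow x hxj⟩
    · exact ⟨_, habove x hxj⟩

end RigidSurj

namespace IsStem

variable {s t m : ℕ} {a C E : ℕ → ℕ}

theorem apply_le_apply (ha : IsStem m a) {i : ℕ} (hi : m ≤ i) : a m ≤ a i := by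
  have := ha.shift i hi
  omega

theorem firstOcc_apply (ha : IsStem m a) {x : ℕ} (hx : m ≤ x) : firstOcc a (a x) = x := by
  refine firstOcc_eq rfl fun i hi => ?_
  rcases lt_or_ge i m with him | him
  · exact ((ha.lt i him).trans_le (ha.apply_le_apply hx)).ne
  · have := ha.shift i him
    have := ha.shift x hx
    omega

theorem le_apply (ha : IsStem m a) (hrigid : RigidSurj s a) (hs : s ≤ m) : s ≤ a m := by
  rcases hs.eq_or_lt with rfl | hs
  · by_contra! hlt
    exact (ha.lt _ hlt).ne (hrigid.fix _ hlt)
  · by_contra! hlt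
    have := ha.lt _ (hlt.trans hs)
    rw [hrigid.fix _ hlt] at this
    exact this.false

theorem exists_eq_comp (ha : IsStem m a) (hrigid : RigidSurj s a) (hC : RigidSurj t C)
    (hCa : ∀ i < m, C i = a i) : ∃ E, RigidSurj (a m) E ∧ C = E ∘ a := by
  refine hrigid.exists_eq_comp hC (fun i i' h => ?_) fun i hi => hCa i ?_
  · rcases lt_or_ge i m with hi | hi
    · have hi' : i' < m := by
        by_contra! hle
        exact ((ha.lt i hi).trans_le (ha.apply_le_apply hle)).ne h
      rw [hCa i hi, hCa i' hi', h]
    · have hi' : m ≤ i' := by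
        by_contra! hlt
        exact ((ha.lt i' hlt).trans_le (ha.apply_le_apply hi)).ne' h
      rw [← ha.firstOcc_apply hi, h, ha.firstOcc_apply hi']
  · exact lt_of_not_ge fun hle => hi.not_ge (ha.apply_le_apply hle)

theorem exists_comp_eq_comp (ha : IsStem m a) (hrigid : RigidSurj s a)
    (hE : RigidSurj (a m) E) : ∃ B, RigidSurj m B ∧ a ∘ B = E ∘ a := by
  let B : ℕ → ℕ := fun i => if i < m then i else firstOcc a (E (a i))
  have hBlt : ∀ i < m, B i = i := fun i hi => if_pos hi
  have hBge : ∀ i, m ≤ i → B i = firstOcc a (E (a i)) := fun i hi => if_neg hi.not_gt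
  have hpreimage : ∀ x l, m ≤ x → E l = a x → m ≤ firstOcc a l ∧ B (firstOcc a l) = x := by
    intro x l hx hl
    have hle : a m ≤ l := by
      by_contra! hlt
      rw [hE.fix l hlt] at hl
      exact (hlt.trans_le (ha.apply_le_apply hx)).ne hl
    have hm : m ≤ firstOcc a l :=
      (ha.firstOcc_apply le_rfl).ge.trans (hrigid.firstOcc_strictMono.monotone hle)
    refine ⟨hm, ?_⟩
    rw [hBge _ hm, hrigid.apply_firstOcc, hl, ha.firstOcc_apply hx]
  refine ⟨B, ⟨hBlt, fun i x hx => ?_, fun x => ?_⟩, funext fun i => ?_⟩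
  · rcases lt_or_ge i m with hi | hi
    · rw [hBlt i hi] at hx
      exact ⟨x, hx, hBlt x (hx.trans hi)⟩
    · rcases lt_or_ge x m with hxm | hxm
      · exact ⟨x, hxm.trans_le hi, hBlt x hxm⟩
      · rw [hBge i hi] at hx
        obtain ⟨l, hl, hlx⟩ := hE.grow _ _ (hrigid.apply_lt_of_lt_firstOcc hx)
        exact ⟨_, (hrigid.firstOcc_strictMono hl).trans_le (firstOcc_apply_le a i),
          (hpreimage x l hxm hlx).2⟩
  · rcases lt_or_ge x m with hxm | hxm
    · exact ⟨x, hBlt x hxm⟩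
    · obtain ⟨l, hl⟩ := hE.surj (a x)
      exact ⟨_, (hpreimage x l hxm hl).2⟩
  · rcases lt_or_ge i m with hi | hi
    · rw [Function.comp_apply, Function.comp_apply, hBlt i hi, hE.fix _ (ha.lt i hi)]
    · rw [Function.comp_apply, Function.comp_apply, hBge i hi, hrigid.apply_firstOcc]

theorem finite_setOf_rigidSurj (s m : ℕ) : {a | RigidSurj s a ∧ IsStem m a}.Finite := by
  refine Set.Finite.of_injOn (f := fun a (i : Fin (m + 1)) => a i)
    (t := Set.univ.pi fun _ => Set.Iic m) ?_ ?_ (Set.Finite.pi fun _ => Set.finite_Iic m)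
  · exact fun a ha i _ => (ha.1.apply_le i).trans i.is_le
  · rintro a ⟨-, ha⟩ b ⟨-, hb⟩ hab
    have heq : ∀ i ≤ m, a i = b i := fun i hi => congrFun hab ⟨i, Nat.lt_succ_of_le hi⟩
    funext i
    rcases le_total i m with hi | hi
    · exact heq i hi
    · have := ha.shift i hi
      have := hb.shift i hi
      have := heq m le_rfl
      omega

end IsStem

/-- The coarsenings of `A` that keep its classes below `s` apart. For `s = j + 1` this is the basic
set `[initSeg A j, A]`, see `RigidSurj.initSeg_comp_eq_iff`. -/
def cone (s : ℕ) (A : ℕ → ℕ) : Set (ℕ → ℕ) := {X | ∃ C, RigidSurj s C ∧ C ∘ A = X}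

section Cone

variable {s t m : ℕ} {A B C X Y a : ℕ → ℕ}

theorem mem_cone_self (s : ℕ) (A : ℕ → ℕ) : A ∈ cone s A := ⟨id, RigidSurj.id s, rfl⟩

theorem cone_subset_cone (hB : B ∈ cone s A) : cone s B ⊆ cone s A := by
  obtain ⟨C, hC, rfl⟩ := hB
  rintro _ ⟨D, hD, rfl⟩
  exact ⟨D ∘ C, hD.comp hC, rfl⟩

theorem cone_antitone (A : ℕ → ℕ) : Antitone fun s => cone s A :=
  fun _ _ hst _ ⟨C, hC, h⟩ => ⟨C, hC.mono hst, h⟩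

theorem RigidSurj.of_mem_cone (hA : RigidSurj t A) (hts : t ≤ s) (hX : X ∈ cone s A) :
    RigidSurj t X := by
  obtain ⟨C, hC, rfl⟩ := hX
  exact (hC.mono hts).comp hA

theorem IsStem.comp_mem_cone (ha : IsStem m a) (hrigid : RigidSurj s a) (hC : RigidSurj t C)
    (hCa : ∀ i < m, C i = a i) (hX : X ∈ cone m A) : C ∘ X ∈ cone (a m) (a ∘ A) := by
  obtain ⟨D, hD, rfl⟩ := hX
  obtain ⟨E, hE, hCD⟩ := ha.exists_eq_comp hrigid
    ((hC.mono (Nat.zero_le t)).comp (hD.mono (Nat.zero_le m)))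
    fun i hi => by rw [Function.comp_apply, hD.fix i hi, hCa i hi]
  exact ⟨E, hE, congrArg (· ∘ A) hCD.symm⟩

theorem IsStem.exists_mem_cone (ha : IsStem m a) (hrigid : RigidSurj s a)
    (hY : Y ∈ cone (a m) (a ∘ A)) : ∃ B ∈ cone m A, a ∘ B = Y := by
  obtain ⟨E, hE, rfl⟩ := hY
  obtain ⟨D, hD, haD⟩ := ha.exists_comp_eq_comp hrigid hE
  exact ⟨D ∘ A, ⟨D, hD, rfl⟩, congrArg (· ∘ A) haD⟩

theorem exists_forall_mem_cone {A : ℕ → ℕ → ℕ} (hA : ∀ k, RigidSurj t (A k))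
    (hstep : ∀ k, A (k + 1) ∈ cone (s + k) (A k)) : ∃ L, ∀ k, L ∈ cone (s + k) (A k) := by
  have hchain : ∀ k N, k ≤ N → A N ∈ cone (s + k) (A k) := by
    intro k N hN
    induction N, hN using Nat.le_induction with
    | base => exact mem_cone_self _ _
    | succ N hN ih => exact cone_subset_cone ih (cone_antitone _ (by omega) (hstep N))
  have hstable : ∀ k N i, k ≤ N → A k i < s + k → A N i = A k i := by
    intro k N i hN hi
    obtain ⟨C, hC, hCA⟩ := hchain k N hN
    rw [← hCA, Function.comp_apply, hC.fix _ hi]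
  obtain ⟨L, hlim⟩ : ∃ L : ℕ → ℕ, ∀ N i, i < N → L i = A N i :=
    ⟨fun i => A (i + 1) i, fun N i hi =>
      (hstable _ _ _ hi (((hA (i + 1)).apply_le i).trans_lt (by omega))).symm⟩
  have hL : RigidSurj t L := by
    refine ⟨fun i hi => ?_, fun i x hx => ?_, fun x => ?_⟩
    · rw [hlim _ i i.lt_succ_self, (hA _).fix i hi]
    · rw [hlim _ i i.lt_succ_self] at hx
      obtain ⟨i', hi', rfl⟩ := (hA (i + 1)).grow i x hx
      exact ⟨i', hi', hlim _ _ (hi'.trans i.lt_succ_self)⟩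
    · obtain ⟨i, hi⟩ := (hA (x + 1)).surj x
      refine ⟨i, (hlim (max (x + 1) (i + 1)) i (by omega)).trans ?_⟩
      exact (hstable _ _ _ (le_max_left _ _) (by omega)).trans hi
  refine ⟨L, fun k => ?_⟩
  have hfactors : L.FactorsThrough (A k) := fun i i' h => by
    obtain ⟨C, -, hCA⟩ := hchain k (k + i + i' + 1) (by omega)
    rw [hlim (k + i + i' + 1) i (by omega), hlim (k + i + i' + 1) i' (by omega), ← hCA,
      Function.comp_apply, h, Function.comp_apply]
  have hfix : ∀ i, A k i < s + k → L i = A k i := fun i hi =>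
    (hlim (max k (i + 1)) i (by omega)).trans (hstable _ _ _ (le_max_left _ _) hi)
  obtain ⟨E, hE, hEL⟩ := (hA k).exists_eq_comp hL hfactors hfix
  exact ⟨E, hE, hEL.symm⟩

theorem exists_mem_cone_forall_of_finite {ι : Type*} {S : Set ι} (hS : S.Finite)
    {Q : ι → (ℕ → ℕ) → Prop}
    (hered : ∀ i ∈ S, ∀ X, Q i X → ∀ Y ∈ cone s X, Q i Y)
    (dense : ∀ i ∈ S, ∀ X ∈ cone s A, ∃ Y ∈ cone s X, Q i Y) :
    ∃ B ∈ cone s A, ∀ i ∈ S, Q i B := by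
  refine Set.Finite.induction_on_subset (motive := fun T _ => ∃ B ∈ cone s A, ∀ i ∈ T, Q i B) S hS
    ⟨A, mem_cone_self s A, fun _ h => h.elim⟩ ?_
  rintro i T hi hT - ⟨B, hB, hBT⟩
  obtain ⟨X, hX, hXi⟩ := dense i hi B hB
  refine ⟨X, cone_subset_cone hB hX, Set.forall_mem_insert.2 ⟨hXi, fun i' hi' => ?_⟩⟩
  exact hered i' (hT hi') B (hBT i' hi') X hX

variable {P : ℕ → (ℕ → ℕ) → Prop}

theorem exists_mem_cone_forall_isStem (hsm : s ≤ m)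
    (hered : ∀ j X, P j X → ∀ Y ∈ cone j X, P j Y)
    (dense : ∀ X ∈ cone s A, ∀ j ≥ s, ∃ Y ∈ cone j X, P j Y) :
    ∃ B ∈ cone m A, ∀ a, RigidSurj s a → IsStem m a → P (a m) (a ∘ B) := by
  have hered' : ∀ a ∈ {a | RigidSurj s a ∧ IsStem m a}, ∀ X, P (a m) (a ∘ X) →
      ∀ Y ∈ cone m X, P (a m) (a ∘ Y) := fun a ⟨hrigid, ha⟩ X hX Y hY =>
    hered _ _ hX _ (ha.comp_mem_cone hrigid hrigid (fun _ _ => rfl) hY)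
  have dense' : ∀ a ∈ {a | RigidSurj s a ∧ IsStem m a}, ∀ X ∈ cone m A,
      ∃ Y ∈ cone m X, P (a m) (a ∘ Y) := by
    rintro a ⟨hrigid, ha⟩ X hX
    obtain ⟨Y, hY, hPY⟩ := dense (a ∘ X)
      (cone_subset_cone (cone_antitone A hsm hX) ⟨a, hrigid, rfl⟩) (a m) (ha.le_apply hrigid hsm)
    obtain ⟨Z, hZ, rfl⟩ := ha.exists_mem_cone hrigid hY
    exact ⟨Z, hZ, hPY⟩
  obtain ⟨B, hB, hP⟩ :=
    exists_mem_cone_forall_of_finite (IsStem.finite_setOf_rigidSurj s m) hered' dense'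
  exact ⟨B, hB, fun a hrigid ha => hP a ⟨hrigid, ha⟩⟩

theorem exists_fusion (hA : RigidSurj 0 A)
    (hered : ∀ j X, P j X → ∀ Y ∈ cone j X, P j Y)
    (dense : ∀ X ∈ cone s A, ∀ j ≥ s, ∃ Y ∈ cone j X, P j Y) :
    ∃ B ∈ cone s A, ∀ X ∈ cone s B, ∀ j ≥ s, P j X := by
  -- There are finitely many stems of length `s + k`, so `P` is secured for all of them at once.
  have hstep : ∀ k, ∀ X ∈ cone s A, ∃ Y ∈ cone (s + k) X,
      ∀ a, RigidSurj s a → IsStem (s + k) a → P (a (s + k)) (a ∘ Y) := fun k X hX =>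
    exists_mem_cone_forall_isStem (Nat.le_add_right s k) hered
      fun Z hZ => dense Z (cone_subset_cone hX hZ)
  choose! step hstep_mem hstep_stem using hstep
  let F : ℕ → ℕ → ℕ := fun k => Nat.rec A step k
  have hF : ∀ k, F k ∈ cone s A := by
    intro k
    induction k with
    | zero => exact mem_cone_self s A
    | succ k ih =>
      exact cone_subset_cone ih (cone_antitone _ (Nat.le_add_right s k) (hstep_mem k _ ih))
  obtain ⟨L, hL⟩ := exists_forall_mem_cone (fun k => hA.of_mem_cone (Nat.zero_le s) (hF k))
    fun k => hstep_mem k _ (hF k)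
  refine ⟨L, hL 0, ?_⟩
  rintro _ ⟨C, hC, rfl⟩ j hj
  obtain ⟨k, hk⟩ := Nat.exists_eq_add_of_le (hj.trans (hC.le_firstOcc j))
  have hrigid := hC.rigidSurj_stem hj
  have hstem : IsStem (s + k) (stem C j) := hk ▸ hC.isStem_stem j
  have hvalue : stem C j (s + k) = j := hk ▸ stem_firstOcc C j
  have hmem := hstem.comp_mem_cone hrigid hC (fun i hi => (stem_of_lt (hk ▸ hi)).symm)
    (cone_antitone _ (Nat.le_succ (s + k)) (hL (k + 1)))
  have hP := hered _ _ (hstep_stem k _ (hF k) _ hrigid hstem) _ hmem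
  rwa [hvalue] at hP

end Cone

section Ultrafilter

-- Such a `w` is an element of a minimal left ideal.
theorem exists_forall_exists_mul_mul_eq {M : Type*} [Semigroup M] [Nonempty M]
    [TopologicalSpace M] [CompactSpace M] [T2Space M]
    (hcont : ∀ w : M, Continuous fun x => x * w) : ∃ w : M, ∀ x, ∃ z, z * (x * w) = w := by
  have hchain : ∀ c : Set M, IsChain (fun w w' => ∃ x, x * w = w') c → c.Nonempty →
      ∃ w', ∀ w ∈ c, ∃ x, x * w = w' := by
    intro c hc hne
    have := hne.to_subtype
    have hdir : Directed (· ⊇ ·) fun w : c => Set.range fun x => x * (w : M) := by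
      rintro ⟨w, hw⟩ ⟨w', hw'⟩
      rcases eq_or_ne w w' with rfl | hww'
      · exact ⟨⟨w, hw⟩, subset_rfl, subset_rfl⟩
      · rcases hc hw hw' hww' with ⟨x, rfl⟩ | ⟨x, rfl⟩
        · exact ⟨⟨_, hw'⟩, Set.range_subset_iff.2 fun y => ⟨y * x, mul_assoc y x w⟩, subset_rfl⟩
        · exact ⟨⟨_, hw⟩, subset_rfl, Set.range_subset_iff.2 fun y => ⟨y * x, mul_assoc y x w'⟩⟩
    obtain ⟨w', hw'⟩ := IsCompact.nonempty_iInter_of_directed_nonempty_isCompact_isClosed _ hdir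
      (fun _ => Set.range_nonempty _) (fun w => isCompact_range (hcont w))
      fun w => (isCompact_range (hcont w)).isClosed
    exact ⟨w', fun w hw => Set.mem_iInter.1 hw' ⟨w, hw⟩⟩
  obtain ⟨w, hw⟩ := exists_maximal_of_nonempty_chains_bounded hchain
    fun {a b c} ⟨x, hx⟩ ⟨y, hy⟩ => ⟨y * x, by rw [mul_assoc, hx, hy]⟩
  exact ⟨w, fun x => hw _ ⟨x, rfl⟩⟩

theorem exists_isIdempotentElem_mul_mul {M : Type*} [Semigroup M]
    [TopologicalSpace M] [CompactSpace M] [T2Space M]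
    (hcont : ∀ w : M, Continuous fun x => x * w) (p q : M) :
    ∃ b, IsIdempotentElem (p * b * q) := by
  obtain ⟨_, ⟨a, rfl⟩, hidem⟩ := exists_idempotent_in_compact_subsemigroup hcont
    (Set.range fun x => x * (q * p)) ⟨_, p, rfl⟩ (isCompact_range (hcont _)) (by
      rintro _ ⟨x, rfl⟩ _ ⟨y, rfl⟩
      exact ⟨x * (q * p) * y, by simp only [mul_assoc]⟩)
  refine ⟨a * (q * p) * a, ?_⟩
  calc p * (a * (q * p) * a) * q * (p * (a * (q * p) * a) * q)
      = p * (a * (q * p) * (a * (q * p)) * (a * (q * p)) * a) * q := by simp only [mul_assoc]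
    _ = p * (a * (q * p) * a) * q := by rw [hidem, hidem]

-- For variable words, `φ i` substitutes the letter `i` for the variable, `σ` includes the words
-- without variable, and `p` is the word consisting of the variable alone.
theorem exists_forall_mul_map_mul_eq {ι S T : Type*}
    [Semigroup S] [Nonempty S] [TopologicalSpace S] [CompactSpace S] [T2Space S]
    [Semigroup T] [TopologicalSpace T] [CompactSpace T] [T2Space T]
    (hS : ∀ w : S, Continuous fun x => x * w) (hT : ∀ w : T, Continuous fun x => x * w)
    (φ : ι → T →ₙ* S) (σ : S → T) (hσ : ∀ i w, φ i (σ w) = w) (p : T) :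
    ∃ w q, ∀ i, w * φ i (p * q) = w ∧ ∀ i', φ i (p * q) * φ i' (p * q) = φ i (p * q) := by
  obtain ⟨w, hw⟩ := exists_forall_exists_mul_mul_eq hS
  obtain ⟨b, hidem⟩ := exists_isIdempotentElem_mul_mul hT p (σ w)
  have hφ : ∀ i, φ i (p * (b * σ w)) = φ i (p * b) * w := fun i => by
    rw [← mul_assoc, map_mul, hσ]
  have habsorb : ∀ i, w * φ i (p * (b * σ w)) = w := fun i => by
    have hsq := hidem.map (φ i)
    rw [mul_assoc] at hsq
    obtain ⟨z, hz⟩ := hw (φ i (p * b))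
    rw [← hφ] at hz
    calc w * φ i (p * (b * σ w)) = z * φ i (p * (b * σ w)) * φ i (p * (b * σ w)) := by rw [hz]
      _ = w := by rw [mul_assoc, hsq.eq, hz]
  refine ⟨w, b * σ w, fun i => ⟨habsorb i, fun i' => ?_⟩⟩
  rw [hφ i, mul_assoc, habsorb]

attribute [local instance] Ultrafilter.mul Ultrafilter.semigroup

theorem ultrafilter_map_mul {F M N : Type*} [Mul M] [Mul N] [FunLike F M N] [MulHomClass F M N]
    (f : F) (U V : Ultrafilter M) : (U * V).map f = U.map f * V.map f := by
  refine Ultrafilter.coe_inj.mp (Filter.ext' fun p => ?_)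
  change (∀ᶠ m in U, ∀ᶠ m' in V, p (f (m * m'))) ↔ ∀ᶠ m in U, ∀ᶠ m' in V, p (f m * f m')
  simp only [map_mul]

variable {Λ : Type*}

/-- The substitution of the letter `l` for the variable of a variable word. Variable words over the
alphabet `Λ` are encoded as words over `Option Λ`, with the variable `none`. -/
def substVar (l : Λ) : FreeMonoid (Option Λ) →* FreeMonoid Λ :=
  FreeMonoid.map fun o => o.getD l

theorem substVar_map_some (l : Λ) (u : FreeMonoid Λ) :
    substVar l (FreeMonoid.map some u) = u := by
  rw [substVar, FreeMonoid.map_map]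
  exact DFunLike.congr_fun FreeMonoid.map_id u

theorem exists_ultrafilter_mul_map_substVar_eq (Λ : Type*) :
    ∃ (w : Ultrafilter (FreeMonoid Λ)) (q : Ultrafilter (FreeMonoid (Option Λ))),
      ∀ l, w * (pure (.of none) * q).map (substVar l) = w ∧
        ∀ l', (pure (.of none) * q).map (substVar l) * (pure (.of none) * q).map (substVar l') =
          (pure (.of none) * q).map (substVar l) :=
  exists_forall_mul_map_mul_eq (p := (pure (.of none) : Ultrafilter (FreeMonoid (Option Λ))))
    Ultrafilter.continuous_mul_left Ultrafilter.continuous_mul_left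
    (fun l => ⟨Ultrafilter.map (substVar l), ultrafilter_map_mul (substVar l)⟩)
    (Ultrafilter.map (FreeMonoid.map some)) fun l w =>
      (w.map_map _ _).trans ((congrArg w.map (funext (substVar_map_some l))).trans w.map_id)

/-- Every finite subset of `G` can be extended within `G` by all instances of a single left
variable word, that is, a word starting with the variable. -/
def IsExtendable (G : Set (FreeMonoid Λ)) : Prop :=
  ∀ F ⊆ G, F.Finite → ∃ x, ∀ u ∈ F, ∀ l, u * substVar l (.of none * x) ∈ G

theorem exists_isExtendable [Finite Λ] (K : Set (FreeMonoid Λ)) :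
    ∃ G, G.Nonempty ∧ IsExtendable G ∧ (G ⊆ K ∨ G ⊆ Kᶜ) := by
  obtain ⟨w, q, hwq⟩ := exists_ultrafilter_mul_map_substVar_eq Λ
  let e : Λ → Ultrafilter (FreeMonoid Λ) := fun l => (pure (.of none) * q).map (substVar l)
  have hwe : ∀ l, w * e l = w := fun l => (hwq l).1
  have hee : ∀ l l', e l * e l' = e l := fun l => (hwq l).2
  obtain ⟨C, hCw, hCK⟩ : ∃ C ∈ w, C = K ∨ C = Kᶜ := by
    rcases w.mem_or_compl_mem K with hK | hK
    exacts [⟨K, hK, Or.inl rfl⟩, ⟨Kᶜ, hK, Or.inr rfl⟩]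
  let G : Set (FreeMonoid Λ) := {u | u ∈ C ∧ ∀ l, ∀ᶠ v in (e l : Filter _), u * v ∈ C}
  have hmem : ∀ᶠ u in (w : Filter _), u ∈ G := by
    refine Filter.Eventually.and hCw (Filter.eventually_all.2 fun l => ?_)
    rw [← Ultrafilter.eventually_mul, hwe]
    exact hCw
  have hext : ∀ u ∈ G, ∀ l, ∀ᶠ v in (e l : Filter _), u * v ∈ G := by
    intro u hu l
    refine (hu.2 l).and (Filter.eventually_all.2 fun l' => ?_)
    have := hu.2 l
    rw [← hee l l', Ultrafilter.eventually_mul] at this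
    simpa only [mul_assoc] using this
  refine ⟨G, hmem.exists, fun F hFG hF => ?_, hCK.imp ?_ ?_⟩
  · have hq : ∀ u ∈ F, ∀ l, ∀ᶠ x in (q : Filter _), u * substVar l (.of none * x) ∈ G :=
      fun u hu l => hext u (hFG hu) l
    exact ((hF.eventually_all).2 fun u hu => Filter.eventually_all.2 (hq u hu)).exists
  · rintro rfl
    exact fun _ hu => hu.1
  · rintro rfl
    exact fun _ hu => hu.1

/-- The `Λ`-words obtained from `u₀` by appending instances of the left variable words
`none * x 0, …, none * x (k - 1)` in turn. -/
def instances (u₀ : FreeMonoid Λ) (x : ℕ → FreeMonoid (Option Λ)) : ℕ → Set (FreeMonoid Λ)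
  | 0 => {u₀}
  | k + 1 => Set.image2 (fun u l => u * substVar l (.of none * x k)) (instances u₀ x k) Set.univ

theorem IsExtendable.exists_instances_subset [Finite Λ] {G : Set (FreeMonoid Λ)}
    (hG : IsExtendable G) {u₀ : FreeMonoid Λ} (hu₀ : u₀ ∈ G) :
    ∃ x, ∀ k, instances u₀ x k ⊆ G := by
  choose! next hnext using hG
  let F : ℕ → Set (FreeMonoid Λ) := fun k => Nat.rec {u₀}
    (fun _ F => Set.image2 (fun u l => u * substVar l (.of none * next F)) F Set.univ) k
  have hF : ∀ k, F k ⊆ G ∧ (F k).Finite := by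
    intro k
    induction k with
    | zero => exact ⟨Set.singleton_subset_iff.2 hu₀, Set.finite_singleton u₀⟩
    | succ k ih =>
      exact ⟨Set.image2_subset_iff.2 fun u hu l _ => hnext _ ih.1 ih.2 u hu l,
        ih.2.image2 _ Set.finite_univ⟩
  have hinst : ∀ k, instances u₀ (fun k => next (F k)) k = F k := by
    intro k
    induction k with
    | zero => rfl
    | succ k ih => rw [instances, ih]
  exact ⟨fun k => next (F k), fun k => hinst k ▸ (hF k).1⟩

theorem exists_instances_subset_or_subset_compl [Finite Λ] (K : Set (FreeMonoid Λ)) :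
    ∃ u₀ x, (∀ k, instances u₀ x k ⊆ K) ∨ ∀ k, instances u₀ x k ⊆ Kᶜ := by
  obtain ⟨G, ⟨u₀, hu₀⟩, hG, hGK⟩ := exists_isExtendable K
  obtain ⟨x, hx⟩ := hG.exists_instances_subset hu₀
  exact ⟨u₀, x, hGK.imp (fun h k => (hx k).trans h) fun h k => (hx k).trans h⟩

end Ultrafilter

section Pigeonhole

theorem exists_forall_map_range_eq {α : Type*} {L : ℕ → List α}
    (hprefix : ∀ k, L k <+: L (k + 1)) (hlength : ∀ k, k < (L (k + 1)).length) :
    ∃ D : ℕ → α, ∀ k, (List.range (L k).length).map D = L k := by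
  have hmono : ∀ m n, m ≤ n → L m <+: L n := fun m n hmn =>
    Nat.rel_of_forall_rel_succ_of_le (· <+: ·) hprefix hmn
  refine ⟨fun i => (L (i + 1))[i]'(hlength i), fun k => ?_⟩
  refine List.ext_getElem (by simp) fun i _ hi => ?_
  simp only [List.getElem_map, List.getElem_range]
  rcases le_total k (i + 1) with h | h
  · exact ((hmono _ _ h).getElem hi).symm
  · exact (hmono _ _ h).getElem (hlength i)

variable {j : ℕ}

theorem rigidSurj_of_positions {D p : ℕ → ℕ} (hfix : ∀ i < j, D i = i)
    (hp : ∀ k, D (p k) = j + k) (hlt : ∀ k, ∀ i < p k, D i < j + k) : RigidSurj j D := by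
  refine ⟨hfix, fun i y hy => ?_, fun y => ?_⟩
  · rcases lt_or_ge y j with hyj | hyj
    · refine ⟨y, not_le.1 fun hle => ?_, hfix y hyj⟩
      rw [hfix i (hle.trans_lt hyj)] at hy
      exact hle.not_gt hy
    · obtain ⟨k, rfl⟩ := Nat.exists_eq_add_of_le hyj
      refine ⟨p k, not_le.1 fun hle => ?_, hp k⟩
      rcases hle.eq_or_lt with rfl | hi
      · exact hy.ne' (hp k)
      · exact hy.not_gt (hlt k i hi)
  · rcases lt_or_ge y j with hyj | hyj
    · exact ⟨y, hfix y hyj⟩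
    · obtain ⟨k, rfl⟩ := Nat.exists_eq_add_of_le hyj
      exact ⟨p k, hp k⟩

/-- The list `0, …, j - 1` followed by `u₀` and by the left variable words
`none * x 0, …, none * x (k - 1)`, where the `i`-th variable is spelled as the new letter
`j + i`. -/
def spell (u₀ : FreeMonoid (Fin j)) (x : ℕ → FreeMonoid (Option (Fin j))) : ℕ → List ℕ
  | 0 => List.range j ++ u₀.toList.map Fin.val
  | k + 1 => spell u₀ x k ++ (j + k) :: (x k).toList.map fun o => o.elim (j + k) Fin.val

variable {u₀ : FreeMonoid (Fin j)} {x : ℕ → FreeMonoid (Option (Fin j))}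

theorem lt_of_mem_spell {k y : ℕ} (hy : y ∈ spell u₀ x k) : y < j + k := by
  induction k with
  | zero =>
    simp only [spell, List.mem_append, List.mem_range, List.mem_map] at hy
    rcases hy with hy | ⟨i, -, rfl⟩
    exacts [hy, i.2]
  | succ k ih =>
    simp only [spell, List.mem_append, List.mem_cons, List.mem_map] at hy
    rcases hy with hy | rfl | ⟨_ | i, -, rfl⟩
    · exact (ih hy).trans (Nat.lt_succ_self _)
    · exact Nat.lt_succ_self _
    · exact Nat.lt_succ_self _
    · exact i.2.trans_le (Nat.le_add_right j (k + 1))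

theorem exists_map_spell_eq {C : ℕ → ℕ} (hfix : ∀ i < j, C i = i) {k : ℕ}
    (hlt : ∀ i < j + k, C i < j) :
    ∃ u ∈ instances u₀ x k, (spell u₀ x k).map C = List.range j ++ u.toList.map Fin.val := by
  induction k with
  | zero =>
    exact ⟨u₀, rfl, (List.map_congr_left fun y hy => hfix y (lt_of_mem_spell hy)).trans
      (List.map_id _)⟩
  | succ k ih =>
    obtain ⟨u, hu, hmap⟩ := ih fun i hi => hlt i (hi.trans (Nat.lt_succ_self _))
    let l : Fin j := ⟨C (j + k), hlt _ (Nat.lt_succ_self _)⟩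
    have hletter : ∀ o : Option (Fin j), C (o.elim (j + k) Fin.val) = (o.getD l).val := by
      rintro (_ | i)
      exacts [rfl, hfix i i.2]
    refine ⟨_, Set.mem_image2_of_mem hu (Set.mem_univ l), ?_⟩
    simp [spell, hmap, hletter, substVar, FreeMonoid.toList_map, Function.comp_def, l]

theorem exists_forall_initSeg_eq_spell (u₀ : FreeMonoid (Fin j))
    (x : ℕ → FreeMonoid (Option (Fin j))) :
    ∃ D, RigidSurj j D ∧ ∀ k, initSeg D (j + k) = spell u₀ x k := by
  have hlength : ∀ k, k < (spell u₀ x (k + 1)).length := by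
    intro k
    induction k with
    | zero => simp [spell]
    | succ k ih =>
      rw [spell, List.length_append, List.length_cons]
      omega
  obtain ⟨D, hD⟩ := exists_forall_map_range_eq (fun k => List.prefix_append _ _) hlength
  have hlt : ∀ k, ∀ i < (spell u₀ x k).length, D i < j + k := fun k i hi =>
    lt_of_mem_spell (hD k ▸ List.mem_map_of_mem (List.mem_range.2 hi))
  have hp : ∀ k, D (spell u₀ x k).length = j + k := fun k => by
    have := congrArg (·[(spell u₀ x k).length]?) (hD (k + 1))
    simpa [spell] using this
  have hfix : ∀ i < j, D i = i := fun i hi => by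
    have := congrArg (·[i]?) (hD 0)
    simpa [spell, hi, List.getElem?_append_left, Nat.lt_add_right] using this
  refine ⟨D, rigidSurj_of_positions hfix hp hlt, fun k => ?_⟩
  rw [initSeg, firstOcc_eq (hp k) fun i hi => (hlt k i hi).ne, hD]

theorem exists_forall_initSeg_mem_or_notMem (j : ℕ) (K : Set (List ℕ)) :
    ∃ D, RigidSurj j D ∧
      ((∀ X ∈ cone j D, initSeg X j ∈ K) ∨ ∀ X ∈ cone j D, initSeg X j ∉ K) := by
  obtain ⟨u₀, x, hux⟩ := exists_instances_subset_or_subset_compl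
    {u : FreeMonoid (Fin j) | List.range j ++ u.toList.map Fin.val ∈ K}
  obtain ⟨D, hD, hspell⟩ := exists_forall_initSeg_eq_spell u₀ x
  have hinst : ∀ X ∈ cone j D, ∃ k, ∃ u ∈ instances u₀ x k,
      initSeg X j = List.range j ++ u.toList.map Fin.val := by
    rintro _ ⟨C, hC, rfl⟩
    obtain ⟨k, hk⟩ := Nat.exists_eq_add_of_le (hC.le_firstOcc j)
    rw [hC.initSeg_comp hD, hk, hspell]
    exact ⟨k, exists_map_spell_eq hC.fix fun i hi => hC.apply_lt_of_lt_firstOcc (hk ▸ hi)⟩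
  refine ⟨D, hD, hux.imp (fun h X hX => ?_) fun h X hX => ?_⟩ <;>
  · obtain ⟨k, u, hu, hXu⟩ := hinst X hX
    exact hXu ▸ h k hu

end Pigeonhole

section Ramsey

variable {s j : ℕ} {A C : ℕ → ℕ} {Y : Set (ℕ → ℕ)}

theorem stem_eq_of_initSeg_eq (h : initSeg A j = initSeg C j) : stem A j = stem C j := by
  have hfirst : firstOcc A j = firstOcc C j := by simpa [initSeg] using congrArg List.length h
  funext i
  rcases lt_or_ge i (firstOcc A j) with hi | hi
  · rw [initSeg, initSeg, hfirst] at h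
    rw [stem_of_lt hi, stem_of_lt (hfirst ▸ hi)]
    exact List.map_inj_left.1 h i (List.mem_range.2 (hfirst ▸ hi))
  · rw [stem_of_le hi, stem_of_le (hfirst ▸ hi), hfirst]

theorem RigidSurj.mem_cone_stem (hC : RigidSurj s C) (hj : s ≤ j) :
    C ∈ cone (j + 1) (stem C j) := by
  obtain ⟨E, hE, hCE⟩ := (hC.isStem_stem j).exists_eq_comp (hC.rigidSurj_stem hj) hC
    fun i hi => (stem_of_lt hi).symm
  rw [stem_firstOcc] at hE
  have hEj : E j = j := by
    have := congrFun hCE (firstOcc C j)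
    rwa [Function.comp_apply, stem_firstOcc, hC.apply_firstOcc, eq_comm] at this
  exact ⟨E, hE.succ hEj, hCE.symm⟩

theorem exists_forall_cone_subset_or_forall_not (hA : RigidSurj 0 A) (s : ℕ)
    (Y : Set (ℕ → ℕ)) :
    ∃ B ∈ cone s A, ∀ X ∈ cone s B, ∀ j ≥ s,
      cone j X ⊆ Y ∨ ∀ X' ∈ cone j X, ¬ cone j X' ⊆ Y := by
  refine exists_fusion hA (fun j X h X' hX' => ?_) fun X _ j _ => ?_
  · exact h.imp (cone_subset_cone hX').trans fun h Z hZ => h Z (cone_subset_cone hX' hZ)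
  · by_cases h : ∃ X' ∈ cone j X, cone j X' ⊆ Y
    · obtain ⟨X', hX', hsub⟩ := h
      exact ⟨X', hX', Or.inl hsub⟩
    · push Not at h
      exact ⟨X, mem_cone_self j X, Or.inr h⟩

theorem exists_cone_subset_or_forall_not_cone_succ_subset (hA : RigidSurj 0 A) (j : ℕ)
    (Y : Set (ℕ → ℕ)) :
    ∃ B ∈ cone j A, cone j B ⊆ Y ∨ ∀ X ∈ cone j B, ¬ cone (j + 1) X ⊆ Y := by
  obtain ⟨B, hB, hdecided⟩ := exists_forall_cone_subset_or_forall_not hA j Y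
  -- Colour an approximation according to whether its basic set below `B` is contained in `Y`.
  obtain ⟨D, hD, hmem | hnot⟩ := exists_forall_initSeg_mem_or_notMem j
    {l | ∃ C, initSeg C j = l ∧ cone (j + 1) (stem C j ∘ B) ⊆ Y}
  · refine ⟨D ∘ B, cone_subset_cone hB ⟨D, hD, rfl⟩, Or.inl ?_⟩
    rintro _ ⟨C, hC, rfl⟩
    obtain ⟨C', hCC', hsub⟩ := hmem (C ∘ D) ⟨C, hC, rfl⟩
    obtain ⟨E, hE, hCE⟩ := (hC.comp hD).mem_cone_stem le_rfl
    rw [← stem_eq_of_initSeg_eq hCC'] at hCE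
    exact hsub ⟨E, hE, congrArg (· ∘ B) hCE⟩
  · refine ⟨D ∘ B, cone_subset_cone hB ⟨D, hD, rfl⟩, Or.inr ?_⟩
    rintro _ ⟨C, hC, rfl⟩ hsub
    have hrigid := hC.comp hD
    obtain ⟨E, hE, hCE⟩ := hrigid.mem_cone_stem le_rfl
    rcases hdecided (stem (C ∘ D) j ∘ B) ⟨_, hrigid.rigidSurj_stem le_rfl, rfl⟩ (j + 1)
      j.le_succ with h | h
    · exact hnot (C ∘ D) ⟨C, hC, rfl⟩ ⟨C ∘ D, rfl, h⟩
    · exact h _ ⟨E, hE, congrArg (· ∘ B) hCE⟩ hsub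

theorem exists_cone_subset_or_disjoint (hA : RigidSurj 0 A) (s : ℕ)
    (hopen : ∀ X ∈ Y, ∃ j, cone j X ⊆ Y) :
    ∃ B ∈ cone s A, cone s B ⊆ Y ∨ Disjoint (cone s B) Y := by
  by_cases haccept : ∃ B ∈ cone s A, cone s B ⊆ Y
  · obtain ⟨B, hB, hsub⟩ := haccept
    exact ⟨B, hB, Or.inl hsub⟩
  push Not at haccept
  obtain ⟨B, hB, hfusion⟩ := exists_fusion hA
    (P := fun j X => cone j X ⊆ Y ∨ ∀ X' ∈ cone j X, ¬ cone (j + 1) X' ⊆ Y)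
    (fun j X h X' hX' => h.imp (cone_subset_cone hX').trans
      fun h Z hZ => h Z (cone_subset_cone hX' hZ))
    fun X hX j _ => exists_cone_subset_or_forall_not_cone_succ_subset
      (hA.of_mem_cone (Nat.zero_le s) hX) j Y
  have hreject : ∀ j ≥ s, ∀ X ∈ cone s B, ¬ cone j X ⊆ Y := by
    intro j hj
    induction j, hj using Nat.le_induction with
    | base => exact fun X hX => haccept X (cone_subset_cone hB hX)
    | succ j hj ih =>
      exact fun X hX => (hfusion X hX j hj).elim (fun h => (ih X hX h).elim)
        fun h => h X (mem_cone_self j X)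
  refine ⟨B, hB, Or.inr (Set.disjoint_left.2 fun X hX hXY => ?_)⟩
  obtain ⟨j, hj⟩ := hopen X hXY
  exact hreject (max s j) (le_max_left s j) X hX ((cone_antitone X (le_max_right s j)).trans hj)

theorem exists_disjoint_cone_iUnion (hA : RigidSurj 0 A) {N : ℕ → Set (ℕ → ℕ)} (j₀ : ℕ)
    (hN : ∀ k, ∀ X ∈ cone s A, ∀ j ≥ j₀, ∃ B ∈ cone j X, Disjoint (cone j B) (N k)) :
    ∃ B ∈ cone s A, Disjoint (cone s B) (⋃ k, N k) := by
  have dense : ∀ X ∈ cone s A, ∀ j ≥ s,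
      ∃ B ∈ cone j X, j₀ ≤ j → ∀ k ∈ Set.Iic j, Disjoint (cone j B) (N k) := by
    intro X hX j hj
    by_cases hj₀ : j₀ ≤ j
    · obtain ⟨B, hB, hdisj⟩ := exists_mem_cone_forall_of_finite (A := X) (s := j)
        (Q := fun k B => Disjoint (cone j B) (N k)) (Set.finite_Iic j)
        (fun k _ B h B' hB' => h.mono_left (cone_subset_cone hB'))
        fun k _ B hB => hN k B (cone_subset_cone hX (cone_antitone X hj hB)) j hj₀
      exact ⟨B, hB, fun _ => hdisj⟩
    · exact ⟨X, mem_cone_self j X, fun h => (hj₀ h).elim⟩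
  obtain ⟨B, hB, hfusion⟩ := exists_fusion hA
    (fun j X h X' hX' hj k hk => (h hj k hk).mono_left (cone_subset_cone hX')) dense
  refine ⟨B, hB, Set.disjoint_iUnion_right.2 fun k => Set.disjoint_left.2 fun X hX => ?_⟩
  exact Set.disjoint_left.1 (hfusion X hX (max s (max j₀ k)) (le_max_left _ _) (by simp) k
    (by simp)) (mem_cone_self _ X)

end Ramsey

/-- The `s` for which the basic set `[r(n,A), A]` of `St t` is `cone s A`. The value `t + 1` is
skipped because `r(0,A) = ∅` carries no information. -/
def level (t n : ℕ) : ℕ := if n = 0 then t else t + n + 1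

section Approximation

variable {t n k : ℕ} {A C : ℕ → ℕ}

theorem le_level (t n : ℕ) : t ≤ level t n := by
  unfold level
  split_ifs <;> omega

theorem level_monotone (t : ℕ) : Monotone (level t) := by
  intro m n h
  unfold level
  split_ifs <;> omega

theorem exists_level_eq {j : ℕ} (hj : t + 2 ≤ j) : ∃ n, level t n = j :=
  ⟨j - t - 1, by rw [level, if_neg (by omega)]; omega⟩

theorem rP_eq_initSeg (t : ℕ) (hn : n ≠ 0) (A : ℕ → ℕ) : rP t n A = initSeg A (t + n) := by
  rw [rP, if_neg hn]
  exact List.ext_getElem (by simp [initSeg, firstOcc]) fun i _ _ => by simp [initSeg]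

theorem rP_comp (hC : RigidSurj (level t n) C) (hA : RigidSurj t A) :
    rP t n (C ∘ A) = rP t n A := by
  by_cases hn : n = 0
  · simp [rP, hn]
  · rw [rP_eq_initSeg t hn, rP_eq_initSeg t hn,
      (hC.mono (le_level t n)).initSeg_comp_eq_iff hA]
    simpa [level, hn] using hC

theorem rigidSurj_level_of_rP_comp_eq (hC : RigidSurj t C) (hA : RigidSurj t A)
    (h : rP t k (C ∘ A) = rP t n A) : RigidSurj (level t n) C := by
  by_cases hn : n = 0
  · simpa [level, hn] using hC
  rw [rP_eq_initSeg t hn] at h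
  by_cases hk : k = 0
  · have hzero : 0 ∈ initSeg A (t + n) := hA.mem_initSeg.2 (by omega)
    simp [← h, rP, hk] at hzero
  · rw [rP_eq_initSeg t hk] at h
    obtain rfl : k = n := by simpa using (hC.comp hA).initSeg_injective hA h
    simpa [level, hn] using (hC.initSeg_comp_eq_iff hA).1 h

end Approximation

namespace St

variable {t n s : ℕ} {A B : ↥(St t)}

/-- The quasi-order of the Ramsey space `St t`. -/
def le (t : ℕ) (A B : ↥(St t)) : Prop := ∃ C ∈ St t, A.val = compP B.val C

/-- The approximation map of the Ramsey space `St t`. -/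
noncomputable def approx (t n : ℕ) (A : ↥(St t)) : List ℕ := rP t n A.val

theorem rigidSurj (A : ↥(St t)) : RigidSurj t A.val := mem_St_iff.1 A.2

theorem le_iff : le t B A ↔ B.val ∈ cone t A.val :=
  exists_congr fun _ => and_congr mem_St_iff eq_comm

instance isPreorder_le (t : ℕ) : IsPreorder ↥(St t) (le t) where
  refl A := le_iff.2 (mem_cone_self t A.val)
  trans _ _ _ hAB hBC := le_iff.2 (cone_subset_cone (le_iff.1 hBC) (le_iff.1 hAB))

theorem approx_eq_of_mem_cone (hB : B.val ∈ cone (level t n) A.val) :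
    approx t n B = approx t n A := by
  obtain ⟨C, hC, hCB⟩ := hB
  exact (congrArg (rP t n) hCB).symm.trans (rP_comp hC (rigidSurj A))

theorem ellSet_approx (n : ℕ) (A : ↥(St t)) :
    EllSet (le t) (approx t) (approx t n A) A = Subtype.val ⁻¹' cone (level t n) A.val := by
  ext B
  constructor
  · rintro ⟨⟨C, hC, hB⟩, k, hk⟩
    refine ⟨C, rigidSurj_level_of_rP_comp_eq (k := k) (mem_St_iff.1 hC) (rigidSurj A) ?_, hB.symm⟩
    exact (congrArg (rP t k) hB).symm.trans hk
  · exact fun hB => ⟨le_iff.2 (cone_antitone A.val (le_level t n) hB), n, approx_eq_of_mem_cone hB⟩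

theorem ellSet_approx_of_mem_cone (hB : B.val ∈ cone (level t n) A.val) :
    EllSet (le t) (approx t) (approx t n A) B = Subtype.val ⁻¹' cone (level t n) B.val := by
  rw [← approx_eq_of_mem_cone hB, ellSet_approx]

theorem ellSet_approx_antitone (A : ↥(St t)) :
    Antitone fun n => EllSet (le t) (approx t) (approx t n A) A := by
  intro m n h
  simp only [ellSet_approx]
  exact Set.preimage_mono (cone_antitone A.val (level_monotone t h))

theorem exists_val_eq_of_mem_cone (hs : t ≤ s) {X : ℕ → ℕ} (hX : X ∈ cone s A.val) :
    ∃ B : ↥(St t), B.val = X :=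
  ⟨⟨X, mem_St_iff.2 ((rigidSurj A).of_mem_cone hs hX)⟩, rfl⟩

theorem exists_mem_ellSet_of_exists_mem_cone {a : List ℕ} {P : Set ↥(St t) → Prop}
    (hne : (EllSet (le t) (approx t) a A).Nonempty)
    (h : ∀ (X : ↥(St t)) (n : ℕ),
      ∃ B ∈ cone (level t n) X.val, P (Subtype.val ⁻¹' cone (level t n) B)) :
    ∃ B ∈ EllSet (le t) (approx t) a A, P (EllSet (le t) (approx t) a B) := by
  obtain ⟨X, hXA, n, rfl⟩ := hne
  obtain ⟨_, hBX, hB⟩ := h X n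
  obtain ⟨B, rfl⟩ := exists_val_eq_of_mem_cone (le_level t n) hBX
  refine ⟨B, ellSet_subset_ellSet _ hXA ?_, ?_⟩
  · rwa [ellSet_approx]
  · rwa [ellSet_approx_of_mem_cone hBX]

theorem isRamseySet_of_isOpen {U : Set ↥(St t)} (hU : IsOpen[EllTop (le t) (approx t)] U) :
    IsRamseySet (le t) (approx t) U := by
  refine fun a A hne => exists_mem_ellSet_of_exists_mem_cone
    (P := fun E => E ⊆ U ∨ E ∩ U = ∅) hne fun X n => ?_
  have hcone : ∀ Y ∈ Subtype.val '' U, ∃ j, cone j Y ⊆ Subtype.val '' U := by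
    rintro _ ⟨Y, hY, rfl⟩
    obtain ⟨k, hk⟩ := exists_ellSet_subset_of_isOpen ellSet_approx_antitone hU hY
    rw [ellSet_approx] at hk
    refine ⟨level t k, fun Z hZ => ?_⟩
    obtain ⟨Z, rfl⟩ := exists_val_eq_of_mem_cone (le_level t k) hZ
    exact ⟨Z, hk hZ, rfl⟩
  obtain ⟨B, hB, h⟩ := exists_cone_subset_or_disjoint
    ((rigidSurj X).mono (Nat.zero_le t)) (level t n) hcone
  refine ⟨B, hB, h.imp (fun hsub Y hY => ?_) fun hdisj => ?_⟩
  · exact Subtype.val_injective.mem_set_image.1 (hsub hY)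
  · exact (Set.disjoint_image_right.1 hdisj).inter_eq

theorem isRamseyNullSet_iUnion {N : ℕ → Set ↥(St t)}
    (hN : ∀ k, IsRamseyNullSet (le t) (approx t) (N k)) :
    IsRamseyNullSet (le t) (approx t) (⋃ k, N k) := by
  refine fun a A hne => exists_mem_ellSet_of_exists_mem_cone
    (P := fun E => E ∩ ⋃ k, N k = ∅) hne fun X n => ?_
  have hnull : ∀ k, ∀ Y ∈ cone (level t n) X.val, ∀ j ≥ t + 2,
      ∃ B ∈ cone j Y, Disjoint (cone j B) (Subtype.val '' N k) := by
    intro k Y hY j hj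
    obtain ⟨Y, rfl⟩ := exists_val_eq_of_mem_cone (le_level t n) hY
    obtain ⟨m, rfl⟩ := exists_level_eq hj
    obtain ⟨B, hB, hdisj⟩ := hN k (approx t m Y) Y ⟨Y, refl Y, m, rfl⟩
    rw [ellSet_approx] at hB
    rw [ellSet_approx_of_mem_cone hB] at hdisj
    exact ⟨B, hB, Set.disjoint_image_right.2 (Set.disjoint_iff_inter_eq_empty.2 hdisj)⟩
  obtain ⟨B, hB, hdisj⟩ := exists_disjoint_cone_iUnion
    ((rigidSurj X).mono (Nat.zero_le t)) (t + 2) hnull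
  rw [← Set.image_iUnion] at hdisj
  exact ⟨B, hB, (Set.disjoint_image_right.1 hdisj).inter_eq⟩

end St

/-- **Theorem (Carlson–Simpson).** For every `t < ω`, `(S_t(ω;ω), ≤, r)` is a
topological Ramsey space, where `A ≤ B` iff `A = B·C` for some
`C ∈ S_t(ω;ω)`. -/
theorem st_is_topological_ramsey_space (t : ℕ) :
    IsTopRamseySpace
      (fun A B : ↥(St t) => ∃ C ∈ St t, A.val = compP B.val C)
      (fun n (A : ↥(St t)) => rP t n A.val) := by
  exact isTopRamseySpace_of_isOpen_of_iUnion (le := St.le t) (r := St.approx t)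
    (fun _ => St.isRamseySet_of_isOpen) fun _ => St.isRamseyNullSet_iUnion
end
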